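/- arXiv:2412.20809 — 3 statements merged into one kernel-verified Lean document; each statement's English description precedes it below -/
import Mathlib

section
/- Let k be an algebraically closed field of characteristic 0, N ≥ 2, and let λ = (λ₁ ≥ … ≥ λ_p ≥ 1) be a partition of N with λ₁ ≥ 3 and 2(N − p) ≥ N. Then the Zariski closure in Mat_N(k) of the set {x + y : x, y ∈ O_λ} equals {M ∈ Mat_N(k) : Tr(M) = 0}; that is, the conical secant variety of the nilpotent orbit O_λ is all of sl_N(k). -/
open Matrix

noncomputable section

/-- The Zariski closure of a set of `N × N` matrices: `M` lies in the closure of `S` iff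
every polynomial in the matrix entries vanishing on `S` vanishes at `M`. -/
def zClosure {k : Type*} [CommRing k] {N : ℕ}
    (S : Set (Matrix (Fin N) (Fin N) k)) : Set (Matrix (Fin N) (Fin N) k) :=
  {M | ∀ P : MvPolynomial (Fin N × Fin N) k,
      (∀ x ∈ S, MvPolynomial.eval (fun q => x q.1 q.2) P = 0) →
      MvPolynomial.eval (fun q => M q.1 q.2) P = 0}

/-- The set of nilpotent matrices of Jordan type `lam`:
`rank (M ^ i) = ∑ l, max (lam l - i, 0)` for all `i ≥ 1`. -/
def jordanOrbit (k : Type*) [Field k] (N : ℕ) {p : ℕ} (lam : Fin p → ℕ) :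
    Set (Matrix (Fin N) (Fin N) k) :=
  {M | ∀ i : ℕ, 1 ≤ i → (M ^ i).rank = ∑ l, (lam l - i)}

section Closure

variable {k : Type*} [Field k] {N : ℕ}

theorem zClosure_subset_of_subset {S T : Set (Matrix (Fin N) (Fin N) k)}
    (h : S ⊆ zClosure T) : zClosure S ⊆ zClosure T :=
  fun _ hM P hP => hM P fun _ hx => h hx P hP

/-- A polynomial map sending `S` into `T` sends the closure of `S` into the closure of `T`. -/
theorem mem_zClosure_of_polynomialMap {S T : Set (Matrix (Fin N) (Fin N) k)}
    (F : Matrix (Fin N) (Fin N) (MvPolynomial (Fin N × Fin N) k))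
    (hF : ∀ x ∈ S, (MvPolynomial.eval fun q : Fin N × Fin N => x q.1 q.2).mapMatrix F ∈ T)
    {M : Matrix (Fin N) (Fin N) k} (hM : M ∈ zClosure S) :
    (MvPolynomial.eval fun q : Fin N × Fin N => M q.1 q.2).mapMatrix F ∈ zClosure T := by
  intro P hP
  have key : ∀ x : Matrix (Fin N) (Fin N) k,
      MvPolynomial.eval (fun q => x q.1 q.2)
          (MvPolynomial.bind₁ (fun q : Fin N × Fin N => F q.1 q.2) P) =
        MvPolynomial.eval (fun q : Fin N × Fin N =>
          (MvPolynomial.eval fun q : Fin N × Fin N => x q.1 q.2).mapMatrix F q.1 q.2) P := by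
    intro x
    rw [← MvPolynomial.coe_aeval_eq_eval, RingHom.coe_coe, MvPolynomial.aeval_bind₁,
      ← MvPolynomial.coe_aeval_eq_eval, RingHom.coe_coe]
    rfl
  rw [← key]
  exact hM _ fun x hx => by rw [key]; exact hP _ (hF x hx)

theorem add_mem_zClosure_image2 {S T : Set (Matrix (Fin N) (Fin N) k)}
    {x y : Matrix (Fin N) (Fin N) k} (hx : x ∈ zClosure S) (hy : y ∈ zClosure T) :
    x + y ∈ zClosure (Set.image2 (· + ·) S T) := by
  have step : ∀ a ∈ S, a + y ∈ zClosure (Set.image2 (· + ·) S T) := by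
    intro a ha
    have := mem_zClosure_of_polynomialMap (T := Set.image2 (· + ·) S T)
      (a.map MvPolynomial.C + mvPolynomialX (Fin N) (Fin N) k)
      (fun b hb => by
        rw [map_add, mvPolynomialX_mapMatrix_eval]
        convert Set.mem_image2_of_mem ha hb using 2
        ext; simp) hy
    rw [map_add, mvPolynomialX_mapMatrix_eval] at this
    convert this using 2
    ext; simp
  have := mem_zClosure_of_polynomialMap (T := zClosure (Set.image2 (· + ·) S T))
      (mvPolynomialX (Fin N) (Fin N) k + y.map MvPolynomial.C)
      (fun b hb => by
        rw [map_add, mvPolynomialX_mapMatrix_eval]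
        convert step b hb using 2
        ext; simp) hx
  rw [map_add, mvPolynomialX_mapMatrix_eval] at this
  refine zClosure_subset_of_subset subset_rfl ?_
  convert this using 2
  ext; simp

theorem conj_mem_zClosure {S T : Set (Matrix (Fin N) (Fin N) k)} (g g' : Matrix (Fin N) (Fin N) k)
    (hS : ∀ x ∈ S, g * x * g' ∈ T) {x : Matrix (Fin N) (Fin N) k} (hx : x ∈ zClosure S) :
    g * x * g' ∈ zClosure T := by
  have key : ∀ x : Matrix (Fin N) (Fin N) k,
      (MvPolynomial.eval fun q : Fin N × Fin N => x q.1 q.2).mapMatrix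
        (g.map MvPolynomial.C * mvPolynomialX (Fin N) (Fin N) k * g'.map MvPolynomial.C)
      = g * x * g' := by
    intro x
    rw [map_mul, map_mul, mvPolynomialX_mapMatrix_eval]
    congr 1
    · congr 1
      ext; simp
    · ext; simp
  rw [← key]
  exact mem_zClosure_of_polynomialMap _ (fun y hy => by rw [key]; exact hS y hy) hx

/-- If a polynomial condition `Q ≠ 0`, satisfied at `M₀`, forces the points of the line through
`M₀` and `M₁` into `S`, then `M₁` lies in the closure of `S`. -/
theorem mem_zClosure_of_line [Infinite k] {S : Set (Matrix (Fin N) (Fin N) k)}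
    (M₀ M₁ : Matrix (Fin N) (Fin N) k) (Q : MvPolynomial (Fin N × Fin N) k)
    (hQ : MvPolynomial.eval (fun q => M₀ q.1 q.2) Q ≠ 0)
    (hS : ∀ s : k, MvPolynomial.eval (fun q => (M₀ + s • (M₁ - M₀)) q.1 q.2) Q ≠ 0 →
      M₀ + s • (M₁ - M₀) ∈ S) :
    M₁ ∈ zClosure S := by
  intro P hP
  let φ : MvPolynomial (Fin N × Fin N) k →ₐ[k] Polynomial k := MvPolynomial.aeval fun q =>
    Polynomial.C (M₀ q.1 q.2) + Polynomial.X * Polynomial.C ((M₁ - M₀) q.1 q.2)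
  have hφ : ∀ (R : MvPolynomial (Fin N × Fin N) k) (s : k), (φ R).eval s =
      MvPolynomial.eval (fun q => (M₀ + s • (M₁ - M₀)) q.1 q.2) R := by
    intro R s
    have : ((Polynomial.aeval s).comp φ) = MvPolynomial.aeval
        (fun q : Fin N × Fin N => (M₀ + s • (M₁ - M₀)) q.1 q.2) := by
      ext q
      simp [φ]
    have h := DFunLike.congr_fun this R
    simpa [MvPolynomial.aeval_eq_eval, Polynomial.coe_aeval_eq_eval] using h
  have hmul : φ P * φ Q = 0 := by
    refine Polynomial.funext fun s => ?_
    rw [Polynomial.eval_mul, hφ, hφ, Polynomial.eval_zero]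
    by_cases h : MvPolynomial.eval (fun q => (M₀ + s • (M₁ - M₀)) q.1 q.2) Q = 0
    · rw [h, mul_zero]
    · rw [hP _ (hS s h), zero_mul]
  have hφQ : φ Q ≠ 0 := by
    intro h
    apply hQ
    have := hφ Q 0
    rw [h] at this
    simpa using this.symm
  have hφP : φ P = 0 := (mul_eq_zero.mp hmul).resolve_right hφQ
  have := hφ P 1
  rw [hφP] at this
  simpa using this.symm

end Closure

section Orbit

variable {k : Type*} [Field k] {N p : ℕ} {lam : Fin p → ℕ}

theorem Matrix.rank_add_le_rank_add_rank {n : Type*} [Fintype n] (A B : Matrix n n k) :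
    (A + B).rank ≤ A.rank + B.rank := by
  rw [Matrix.rank, Matrix.rank, Matrix.rank]
  refine le_trans (Submodule.finrank_mono ?_) (Submodule.finrank_add_le_finrank_add_finrank _ _)
  rintro _ ⟨v, rfl⟩
  rw [Matrix.mulVecLin_add, LinearMap.add_apply]
  exact Submodule.add_mem_sup ⟨v, rfl⟩ ⟨v, rfl⟩

theorem conj_mem_jordanOrbit {g g' x : Matrix (Fin N) (Fin N) k} (hg : g' * g = 1)
    (hx : x ∈ jordanOrbit k N lam) : g * x * g' ∈ jordanOrbit k N lam := by
  intro i hi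
  have hpow : (g * x * g') ^ i = g * x ^ i * g' := by
    induction i, hi using Nat.le_induction with
    | base => simp
    | succ i _ ih =>
      rw [pow_succ, ih, pow_succ]
      calc g * x ^ i * g' * (g * x * g') = g * x ^ i * (g' * g) * x * g' := by
            simp only [Matrix.mul_assoc]
        _ = _ := by rw [hg]; simp only [Matrix.mul_assoc, Matrix.one_mul]
  have h1 : IsUnit g.det := Matrix.isUnit_det_of_left_inverse hg
  have h2 : IsUnit g'.det := Matrix.isUnit_det_of_right_inverse hg
  rw [hpow, Matrix.rank_mul_eq_left_of_isUnit_det _ _ h2,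
    Matrix.rank_mul_eq_right_of_isUnit_det _ _ h1, hx i hi]

theorem conj_mem_zClosure_jordanOrbit {B x z : Matrix (Fin N) (Fin N) k} (hB : B.det ≠ 0)
    (hz : z ∈ zClosure (jordanOrbit k N lam)) (h : x * B = B * z) :
    x ∈ zClosure (jordanOrbit k N lam) := by
  have hu : IsUnit B.det := isUnit_iff_ne_zero.mpr hB
  have hx : x = B * z * B⁻¹ := by
    rw [← h, Matrix.mul_assoc, Matrix.mul_nonsing_inv _ hu, Matrix.mul_one]
  rw [hx]
  exact conj_mem_zClosure _ _
    (fun y hy => conj_mem_jordanOrbit (Matrix.nonsing_inv_mul _ hu) hy) hz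

theorem trace_eq_zero_of_mem_jordanOrbit {x : Matrix (Fin N) (Fin N) k}
    (hx : x ∈ jordanOrbit k N lam) : x.trace = 0 := by
  have h := hx (∑ l, lam l + 1) (by omega)
  rw [Finset.sum_eq_zero fun l _ => Nat.sub_eq_zero_of_le
    ((Finset.single_le_sum (fun _ _ => Nat.zero_le _) (Finset.mem_univ l)).trans
      (Nat.le_succ _))] at h
  have hz : x ^ (∑ l, lam l + 1) = 0 := by
    rw [Matrix.rank, Submodule.finrank_eq_zero, LinearMap.range_eq_bot] at h
    exact Matrix.toLin'.injective (by rw [Matrix.toLin'_apply', h, map_zero])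
  exact (Matrix.isNilpotent_trace_of_isNilpotent ⟨_, hz⟩).eq_zero

theorem zClosure_add_subset_trace :
    zClosure (Set.image2 (· + ·) (jordanOrbit k N lam) (jordanOrbit k N lam))
      ⊆ {M : Matrix (Fin N) (Fin N) k | Matrix.trace M = 0} := by
  intro M hM
  have := hM (∑ i, MvPolynomial.X (i, i)) (by
    rintro _ ⟨x, hx, y, hy, rfl⟩
    have h := congrArg₂ (· + ·) (trace_eq_zero_of_mem_jordanOrbit hx)
      (trace_eq_zero_of_mem_jordanOrbit hy)
    simpa [Matrix.trace, Finset.sum_add_distrib] using h)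
  simpa [Matrix.trace] using this

end Orbit

section Levels

variable {k : Type*} [Field k] {N p : ℕ} {lam : Fin p → ℕ}

/-- `x` strictly raises the level of basis vectors. -/
def RaisesLevel (lev : Fin N → ℕ) (x : Matrix (Fin N) (Fin N) k) : Prop :=
  ∀ a b, x a b ≠ 0 → lev b < lev a

theorem RaisesLevel.pow {lev : Fin N → ℕ} {x : Matrix (Fin N) (Fin N) k}
    (hx : RaisesLevel lev x) (i : ℕ) {a b : Fin N} (h : (x ^ i) a b ≠ 0) :
    lev b + i ≤ lev a := by
  induction i generalizing a b with
  | zero =>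
    have : a = b := by
      by_contra hab
      exact h (by simp [hab])
    simp [this]
  | succ i ih =>
    rw [pow_succ, Matrix.mul_apply] at h
    obtain ⟨c, -, hc⟩ := Finset.exists_ne_zero_of_sum_ne_zero h
    have h1 := ih (left_ne_zero_of_mul hc)
    have h2 := hx c b (right_ne_zero_of_mul hc)
    omega

/-- The projection onto the coordinates of level at least `i`. -/
def levelProj (k : Type*) [Field k] (lev : Fin N → ℕ) (i : ℕ) : Matrix (Fin N) (Fin N) k :=
  diagonal fun a => if i ≤ lev a then 1 else 0

theorem rank_levelProj (lev : Fin N → ℕ) (i : ℕ) :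
    (levelProj k lev i).rank = (Finset.univ.filter fun a => i ≤ lev a).card := by
  classical
  rw [levelProj, rank_diagonal, Fintype.card_subtype]
  congr 1
  ext a
  simp

theorem rank_one_sub_levelProj (lev : Fin N → ℕ) (i : ℕ) :
    (1 - levelProj k lev i).rank + (Finset.univ.filter fun a => i ≤ lev a).card = N := by
  classical
  have : (1 - levelProj k lev i) = diagonal fun a => if i ≤ lev a then (0 : k) else 1 := by
    rw [levelProj, ← diagonal_one, diagonal_sub]
    congr 1
    ext a
    split_ifs <;> simp
  rw [this, rank_diagonal, Fintype.card_subtype]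
  have h := Finset.card_filter_add_card_filter_not (s := (Finset.univ : Finset (Fin N)))
    (fun a => i ≤ lev a)
  rw [Finset.card_univ, Fintype.card_fin, add_comm] at h
  convert h using 2
  congr 1
  ext a
  simp

theorem RaisesLevel.rank_pow_le {lev : Fin N → ℕ} {x : Matrix (Fin N) (Fin N) k}
    (hx : RaisesLevel lev x) (i : ℕ) :
    (x ^ i).rank ≤ (Finset.univ.filter fun a => i ≤ lev a).card := by
  have h : x ^ i = levelProj k lev i * x ^ i := by
    ext a b
    rw [levelProj, diagonal_mul]
    split_ifs with ha
    · rw [one_mul]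
    · rw [zero_mul]
      by_contra hab
      have := hx.pow i hab
      omega
  rw [h, ← rank_levelProj (k := k)]
  exact rank_mul_le_left _ _

theorem le_rank_of_det_ne_zero {lev : Fin N → ℕ} {i : ℕ} {x y : Matrix (Fin N) (Fin N) k}
    (h : (1 - levelProj k lev i + x * y).det ≠ 0) :
    (Finset.univ.filter fun a => i ≤ lev a).card ≤ x.rank := by
  have h1 := rank_of_isUnit _ ((isUnit_iff_isUnit_det _).mpr (isUnit_iff_ne_zero.mpr h))
  have h2 := rank_add_le_rank_add_rank (1 - levelProj k lev i) (x * y)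
  have h3 := rank_mul_le_left x y
  have h4 := rank_one_sub_levelProj (k := k) lev i
  rw [Fintype.card_fin] at h1
  omega

/-- The nilpotent matrix moving each cell `(l, j)` of the diagram of `lam` to `(l, j + 1)`, in the
numbering `σ` of the cells. -/
def cellShift (k : Type*) [Field k] (σ : Fin N ≃ Σ l, Fin (lam l)) (i : ℕ) :
    Matrix (Fin N) (Fin N) k :=
  of fun a b => if (σ a).1 = (σ b).1 ∧ ((σ a).2 : ℕ) = (σ b).2 + i then 1 else 0

theorem cell_ext {c d : Σ l, Fin (lam l)} (h1 : c.1 = d.1) (h2 : (c.2 : ℕ) = d.2) : c = d := by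
  obtain ⟨l, j⟩ := c
  obtain ⟨l', j'⟩ := d
  dsimp only at h1 h2
  subst h1
  rw [Fin.ext h2]

theorem cellShift_mul (σ : Fin N ≃ Σ l, Fin (lam l)) (i j : ℕ) :
    cellShift k σ i * cellShift k σ j = cellShift k σ (i + j) := by
  ext a b
  rw [mul_apply]
  simp only [cellShift, of_apply]
  split_ifs with h
  · have hlt : ((σ b).2 : ℕ) + j < lam (σ b).1 := by
      have h1 := (σ a).2.isLt
      have h2 := congrArg lam h.1
      omega
    obtain ⟨d, hd⟩ := σ.surjective ⟨(σ b).1, ⟨(σ b).2 + j, hlt⟩⟩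
    have hd1 : (σ d).1 = (σ b).1 := by rw [hd]
    have hd2 : ((σ d).2 : ℕ) = (σ b).2 + j := by rw [hd]
    rw [Finset.sum_eq_single d]
    · rw [if_pos ⟨h.1.trans hd1.symm, by omega⟩, if_pos ⟨hd1, hd2⟩, one_mul]
    · intro c _ hc
      rw [if_neg (c := _ ∧ ((σ c).2 : ℕ) = (σ b).2 + j), mul_zero]
      exact fun h' => hc (σ.injective (cell_ext (h'.1.trans hd1.symm) (h'.2.trans hd2.symm)))
    · simp
  · refine Finset.sum_eq_zero fun c _ => ?_
    by_contra hne
    have h1 := left_ne_zero_of_mul hne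
    have h2 := right_ne_zero_of_mul hne
    rw [ne_eq, ite_eq_right_iff, not_forall] at h1 h2
    obtain ⟨h1, -⟩ := h1
    obtain ⟨h2, -⟩ := h2
    exact h ⟨h1.1.trans h2.1, by omega⟩

theorem cellShift_zero (σ : Fin N ≃ Σ l, Fin (lam l)) : cellShift k σ 0 = 1 := by
  ext a b
  rw [one_apply, cellShift, of_apply]
  refine if_congr ⟨fun h => σ.injective (cell_ext h.1 h.2), ?_⟩ rfl rfl
  rintro rfl
  simp

theorem cellShift_one_pow (σ : Fin N ≃ Σ l, Fin (lam l)) (i : ℕ) :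
    cellShift k σ 1 ^ i = cellShift k σ i := by
  induction i with
  | zero => rw [pow_zero, cellShift_zero]
  | succ i ih => rw [pow_succ, ih, cellShift_mul]

theorem cellShift_mul_transpose (σ : Fin N ≃ Σ l, Fin (lam l)) (i : ℕ) :
    cellShift k σ i * (cellShift k σ i)ᵀ = levelProj k (fun a => ((σ a).2 : ℕ)) i := by
  ext a b
  rw [mul_apply, levelProj, diagonal_apply]
  simp only [cellShift, of_apply, transpose_apply]
  split_ifs with h h'
  · subst h
    obtain ⟨d, hd⟩ := σ.surjective ⟨(σ a).1, ⟨(σ a).2 - i, by omega⟩⟩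
    have hd1 : (σ d).1 = (σ a).1 := by rw [hd]
    have hd2 : ((σ d).2 : ℕ) = (σ a).2 - i := by rw [hd]
    rw [Finset.sum_eq_single d]
    · rw [if_pos ⟨hd1.symm, by omega⟩, one_mul]
    · intro c _ hc
      rw [if_neg, zero_mul]
      exact fun h' => hc (σ.injective (cell_ext (h'.1.symm.trans hd1.symm) (by omega)))
    · simp
  · subst h
    refine Finset.sum_eq_zero fun c _ => ?_
    rw [if_neg, zero_mul]
    omega
  · refine Finset.sum_eq_zero fun c _ => ?_
    by_contra hne
    have h1 := left_ne_zero_of_mul hne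
    have h2 := right_ne_zero_of_mul hne
    rw [ne_eq, ite_eq_right_iff, not_forall] at h1 h2
    obtain ⟨h1, -⟩ := h1
    obtain ⟨h2, -⟩ := h2
    exact h (σ.injective (cell_ext (h1.1.trans h2.1.symm) (h1.2.trans h2.2.symm)))

theorem card_level_ge (σ : Fin N ≃ Σ l, Fin (lam l)) (i : ℕ) :
    (Finset.univ.filter fun a => i ≤ ((σ a).2 : ℕ)).card = ∑ l, (lam l - i) := by
  classical
  rw [← Fintype.card_subtype, Fintype.card_congr (σ.subtypeEquiv
    (q := fun c : Σ l, Fin (lam l) => i ≤ (c.2 : ℕ)) fun _ => Iff.rfl),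
    Fintype.card_subtype, Finset.card_filter, Fintype.sum_sigma]
  refine Finset.sum_congr rfl fun l _ => ?_
  dsimp only
  rw [Fin.sum_univ_eq_sum_range (fun j => if i ≤ j then 1 else 0), ← Finset.card_filter]
  have : (Finset.range (lam l)).filter (fun j => i ≤ j) = Finset.Ico i (lam l) := by
    ext j
    simp [and_comm]
  rw [this, Nat.card_Ico]

/-- A matrix that strictly raises the column index of the cells of the diagram of `lam` lies in the
closure of the orbit of Jordan type `lam`. -/
theorem RaisesLevel.mem_zClosure [Infinite k] (σ : Fin N ≃ Σ l, Fin (lam l))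
    {z : Matrix (Fin N) (Fin N) k} (hz : RaisesLevel (fun a => ((σ a).2 : ℕ)) z) :
    z ∈ zClosure (jordanOrbit k N lam) := by
  set lev : Fin N → ℕ := fun a => ((σ a).2 : ℕ) with hlev
  let D : ℕ → MvPolynomial (Fin N × Fin N) k := fun i =>
    ((1 - levelProj k lev i).map MvPolynomial.C + mvPolynomialX (Fin N) (Fin N) k ^ i *
      ((cellShift k σ i)ᵀ).map MvPolynomial.C).det
  have hD : ∀ (i : ℕ) (M : Matrix (Fin N) (Fin N) k),
      MvPolynomial.eval (fun q => M q.1 q.2) (D i) =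
        (1 - levelProj k lev i + M ^ i * (cellShift k σ i)ᵀ).det := by
    intro i M
    have hC : ∀ A : Matrix (Fin N) (Fin N) k,
        (MvPolynomial.eval fun q : Fin N × Fin N => M q.1 q.2).mapMatrix (A.map MvPolynomial.C)
          = A := by
      intro A
      ext
      simp
    rw [RingHom.map_det, map_add, map_mul, map_pow, mvPolynomialX_mapMatrix_eval, hC, hC]
  refine mem_zClosure_of_line (cellShift k σ 1) z (∏ i ∈ Finset.range (N + 1), D i) ?_ ?_
  · rw [map_prod]
    refine Finset.prod_ne_zero_iff.mpr fun i _ => ?_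
    rw [hD, cellShift_one_pow, cellShift_mul_transpose, sub_add_cancel, det_one]
    exact one_ne_zero
  · intro s hs i _
    set x := cellShift k σ 1 + s • (z - cellShift k σ 1) with hx
    have hraise : RaisesLevel lev x := by
      intro a b hab
      by_contra hlt
      have h1 : z a b = 0 := by
        by_contra h
        exact hlt (hz a b h)
      have h2 : cellShift k σ 1 a b = 0 := by
        rw [cellShift, of_apply, if_neg]
        rintro ⟨-, h⟩
        simp only [hlev] at hlt
        omega
      apply hab
      simp [hx, h1, h2]
    rw [← card_level_ge σ]
    refine le_antisymm (hraise.rank_pow_le i) ?_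
    by_cases hi : i ≤ N
    · rw [map_prod, Finset.prod_ne_zero_iff] at hs
      have := hs i (Finset.mem_range.mpr (by omega))
      rw [hD] at this
      exact le_rank_of_det_ne_zero this
    · rw [Finset.filter_false_of_mem]
      · simp
      · intro a _ ha
        have h1 := (σ a).2.isLt
        have h2 : ∑ l, lam l = N := by
          simpa using (Fintype.card_congr σ).symm
        have h3 := Finset.single_le_sum (f := lam) (fun _ _ => Nat.zero_le _)
          (Finset.mem_univ (σ a).1)
        omega

end Levels

section Positions

variable {k : Type*} [Field k] {N p : ℕ} {lam : Fin p → ℕ}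

theorem exists_monotone_cell_numbering (hsum : ∑ l, lam l = N) :
    ∃ σ : Fin N ≃ Σ l, Fin (lam l), Monotone fun a => ((σ a).2 : ℕ) := by
  have e : Fin N ≃ Σ l, Fin (lam l) := Fintype.equivOfCardEq (by simp [hsum])
  exact ⟨(Tuple.sort fun a => ((e a).2 : ℕ)).trans e,
    Tuple.monotone_sort fun a => ((e a).2 : ℕ)⟩

theorem card_level_eq (σ : Fin N ≃ Σ l, Fin (lam l)) (j : ℕ) :
    (Finset.univ.filter fun a => ((σ a).2 : ℕ) = j).card =
      (Finset.univ.filter fun l => j < lam l).card := by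
  refine Finset.card_nbij (fun a => (σ a).1) ?_ ?_ ?_
  · intro a ha
    simp only [Finset.coe_filter, Finset.mem_univ, true_and,
      Set.mem_ofPred_eq] at ha ⊢
    exact ha ▸ (σ a).2.isLt
  · intro a ha b hb hab
    simp only [Finset.coe_filter, Finset.mem_univ, true_and, Set.mem_ofPred_eq] at ha hb
    exact σ.injective (cell_ext hab (ha.trans hb.symm))
  · intro l hl
    simp only [Finset.coe_filter, Finset.mem_univ, true_and, Set.mem_ofPred_eq] at hl
    obtain ⟨a, ha⟩ := σ.surjective ⟨l, ⟨j, hl⟩⟩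
    refine ⟨a, ?_, by simp [ha]⟩
    simp only [Finset.coe_filter, Finset.mem_univ, true_and, Set.mem_ofPred_eq]
    rw [ha]

/-- A run of positions of constant level `j` is no longer than the `j`-th column of the diagram. -/
theorem run_length_le_card {σ : Fin N ≃ Σ l, Fin (lam l)}
    (hσ : Monotone fun a => ((σ a).2 : ℕ)) {a b : Fin N}
    (hab : ((σ b).2 : ℕ) ≤ (σ a).2) :
    (b : ℕ) + 1 - a ≤ (Finset.univ.filter fun l => ((σ a).2 : ℕ) < lam l).card := by
  rw [← card_level_eq σ, ← Fin.card_Icc]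
  refine Finset.card_le_card fun c hc => ?_
  rw [Finset.mem_Icc] at hc
  rw [Finset.mem_filter]
  exact ⟨Finset.mem_univ _, le_antisymm ((hσ hc.2).trans hab) (hσ hc.1)⟩

theorem level_lt_of_add_half_le {σ : Fin N ≃ Σ l, Fin (lam l)}
    (hσ : Monotone fun a => ((σ a).2 : ℕ)) (hp : 2 * p ≤ N) {a b : Fin N}
    (hab : (a : ℕ) + N / 2 ≤ b) : ((σ a).2 : ℕ) < (σ b).2 := by
  by_contra! h
  have h1 := run_length_le_card hσ h
  have h2 := (Finset.univ.filter fun l => ((σ a).2 : ℕ) < lam l).card_le_univ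
  rw [Fintype.card_fin] at h2
  omega

theorem level_half_lt_level_last {σ : Fin N ≃ Σ l, Fin (lam l)}
    (hσ : Monotone fun a => ((σ a).2 : ℕ)) {l₀ : Fin p} (hl₀ : 3 ≤ lam l₀) {a b : Fin N}
    (ha : (a : ℕ) = N / 2) (hb : (b : ℕ) = N - 1) : ((σ a).2 : ℕ) < (σ b).2 := by
  by_contra! h
  have htop : 2 ≤ ((σ b).2 : ℕ) := by
    obtain ⟨c, hc⟩ := σ.surjective ⟨l₀, ⟨2, hl₀⟩⟩
    have h1 : c ≤ b := Fin.le_def.mpr (by omega)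
    calc 2 = ((σ c).2 : ℕ) := by rw [hc]
      _ ≤ _ := hσ h1
  have h1 := run_length_le_card hσ h
  set j : ℕ := ((σ a).2 : ℕ)
  have hcol : ∀ i ≤ j, (Finset.univ.filter fun l => j < lam l).card ≤
      (Finset.univ.filter fun c => ((σ c).2 : ℕ) = i).card := by
    intro i hi
    rw [card_level_eq]
    refine Finset.card_le_card fun l => ?_
    simp only [Finset.mem_filter, Finset.mem_univ, true_and]
    omega
  have hdisj : ((Finset.univ.filter fun c => ((σ c).2 : ℕ) = 0).card +
      (Finset.univ.filter fun c => ((σ c).2 : ℕ) = 1).card) +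
      (Finset.univ.filter fun c => ((σ c).2 : ℕ) = j).card ≤ N := by
    rw [← Finset.card_union_of_disjoint, ← Finset.card_union_of_disjoint]
    · exact (Finset.card_le_univ _).trans_eq (Fintype.card_fin N)
    · rw [Finset.disjoint_left]
      intro c
      simp only [Finset.mem_union, Finset.mem_filter, Finset.mem_univ, true_and]
      omega
    · rw [Finset.disjoint_left]
      intro c
      simp only [Finset.mem_filter, Finset.mem_univ, true_and]
      omega
  have h0 := hcol 0 (by omega)
  have h2 := hcol 1 (by omega)
  have h3 := hcol j le_rfl
  have := a.isLt
  omega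

/-- A nilpotent matrix moving every basis vector, in a suitable order, at least `N / 2` steps
forward, or from step `N / 2` to the last one, lies in the closure of the orbit. -/
theorem mem_zClosure_of_positions [Infinite k] (hsum : ∑ l, lam l = N) (hp : 2 * p ≤ N)
    {l₀ : Fin p} (hl₀ : 3 ≤ lam l₀) (pos : ℕ → ℕ) (hpos : ∀ a < N, pos a < N)
    (hinj : ∀ a < N, ∀ b < N, pos a = pos b → a = b) {z : Matrix (Fin N) (Fin N) k}
    (hz : ∀ a b : Fin N, z a b ≠ 0 →
      pos b + N / 2 ≤ pos a ∨ pos b = N / 2 ∧ pos a = N - 1) :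
    z ∈ zClosure (jordanOrbit k N lam) := by
  obtain ⟨σ, hσ⟩ := exists_monotone_cell_numbering hsum
  let π : Fin N → Fin N := fun a => ⟨pos a, hpos a a.isLt⟩
  have hπ : Function.Injective π := fun a b hab =>
    Fin.ext (hinj a a.isLt b b.isLt (congrArg Fin.val hab))
  let τ : Fin N ≃ Fin N := Equiv.ofBijective π (Finite.injective_iff_bijective.mp hπ)
  refine RaisesLevel.mem_zClosure (τ.trans σ) fun a b hab => ?_
  rcases hz a b hab with h | ⟨h1, h2⟩
  · exact level_lt_of_add_half_le (a := π b) (b := π a) hσ hp h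
  · exact level_half_lt_level_last (a := π b) (b := π a) hσ hl₀ h1 h2

end Positions

section Companion

variable {k : Type*} [Field k] {N : ℕ}

/-- The companion matrix with last column `c`. -/
def companionMatrix (c : Fin N → k) : Matrix (Fin N) (Fin N) k :=
  of fun a b => if (b : ℕ) + 1 < N then (if (a : ℕ) = b + 1 then 1 else 0) else c a

/-- The matrix with columns `e₀, A e₀, A² e₀, …`. -/
def krylovMatrix {R : Type*} [CommRing R] (hN : 0 < N) (A : Matrix (Fin N) (Fin N) R) :
    Matrix (Fin N) (Fin N) R :=
  of fun a b => (A ^ (b : ℕ)) a ⟨0, hN⟩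

theorem mul_krylovMatrix (hN : 0 < N) {A : Matrix (Fin N) (Fin N) k}
    (hK : (krylovMatrix hN A).det ≠ 0) :
    ∃ c, A * krylovMatrix hN A = krylovMatrix hN A * companionMatrix c := by
  have hu : IsUnit (krylovMatrix hN A).det := isUnit_iff_ne_zero.mpr hK
  let v : Fin N → k := fun a => (A ^ N) a ⟨0, hN⟩
  refine ⟨(krylovMatrix hN A)⁻¹ *ᵥ v, ?_⟩
  have hv : krylovMatrix hN A *ᵥ ((krylovMatrix hN A)⁻¹ *ᵥ v) = v := by
    rw [mulVec_mulVec, mul_nonsing_inv _ hu, one_mulVec]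
  ext a b
  have hl : (A * krylovMatrix hN A) a b = (A ^ ((b : ℕ) + 1)) a ⟨0, hN⟩ := by
    rw [pow_succ', mul_apply, mul_apply]
    rfl
  rw [hl, mul_apply]
  by_cases hb : (b : ℕ) + 1 < N
  · rw [Finset.sum_eq_single ⟨(b : ℕ) + 1, hb⟩]
    · simp [companionMatrix, krylovMatrix, hb]
    · intro c _ hc
      rw [companionMatrix, of_apply, if_pos hb, if_neg, mul_zero]
      exact fun h => hc (Fin.ext h)
    · simp
  · have hb' : (b : ℕ) + 1 = N := by omega
    have := congrFun hv a
    rw [mulVec, dotProduct] at this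
    simp only [companionMatrix, of_apply, if_neg hb]
    rw [hb']
    exact this.symm

theorem trace_companionMatrix (c : Fin N → k) (last : Fin N) (hlast : (last : ℕ) = N - 1) :
    (companionMatrix c).trace = c last := by
  rw [trace, Finset.sum_eq_single last]
  · rw [diag_apply, companionMatrix, of_apply, if_neg (by omega)]
  · intro a _ ha
    have : (a : ℕ) ≠ last := fun h => ha (Fin.ext h)
    rw [diag_apply, companionMatrix, of_apply, if_pos (by omega), if_neg (by omega)]
  · simp

theorem krylovMatrix_companionMatrix_zero (hN : 0 < N) :
    krylovMatrix hN (companionMatrix (0 : Fin N → k)) = 1 := by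
  have key : ∀ j : ℕ, j < N → ∀ a : Fin N,
      (companionMatrix (0 : Fin N → k) ^ j) a ⟨0, hN⟩ = if (a : ℕ) = j then 1 else 0 := by
    intro j
    induction j with
    | zero =>
      intro _ a
      rw [pow_zero, one_apply]
      exact if_congr Fin.ext_iff rfl rfl
    | succ j ih =>
      intro hj a
      rw [pow_succ', mul_apply, Finset.sum_eq_single ⟨j, by omega⟩]
      · rw [ih (by omega)]
        simp [companionMatrix, hj]
      · intro b _ hb
        rw [ih (by omega), if_neg, mul_zero]
        exact fun h => hb (Fin.ext h)
      · simp
  ext a b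
  rw [krylovMatrix, of_apply, key b b.isLt, one_apply]
  exact if_congr Fin.ext_iff.symm rfl rfl

/-- Every trace zero matrix is a limit of conjugates of trace zero companion matrices. -/
theorem trace_eq_zero_subset_zClosure [Infinite k] (hN : 2 ≤ N)
    {S : Set (Matrix (Fin N) (Fin N) k)}
    (hconj : ∀ g g' x : Matrix (Fin N) (Fin N) k, g' * g = 1 → x ∈ S → g * x * g' ∈ S)
    (hS : ∀ c : Fin N → k, c ⟨N - 1, by omega⟩ = 0 → companionMatrix c ∈ zClosure S) :
    {M : Matrix (Fin N) (Fin N) k | Matrix.trace M = 0} ⊆ zClosure S := by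
  intro M hM
  have h0 : 0 < N := by omega
  refine zClosure_subset_of_subset subset_rfl ?_
  have heval : ∀ A : Matrix (Fin N) (Fin N) k, MvPolynomial.eval (fun q => A q.1 q.2)
      (krylovMatrix h0 (mvPolynomialX (Fin N) (Fin N) k)).det = (krylovMatrix h0 A).det := by
    intro A
    rw [RingHom.map_det]
    congr 1
    ext a b
    have h : (MvPolynomial.eval fun q : Fin N × Fin N => A q.1 q.2).mapMatrix
        (mvPolynomialX (Fin N) (Fin N) k ^ (b : ℕ)) = A ^ (b : ℕ) := by
      rw [map_pow, mvPolynomialX_mapMatrix_eval]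
    exact congrFun (congrFun h a) ⟨0, h0⟩
  refine mem_zClosure_of_line (companionMatrix 0) M
    (krylovMatrix h0 (mvPolynomialX (Fin N) (Fin N) k)).det ?_ ?_
  · rw [heval, krylovMatrix_companionMatrix_zero, det_one]
    exact one_ne_zero
  · intro s hs
    rw [heval] at hs
    set A := companionMatrix 0 + s • (M - companionMatrix 0) with hA
    have htr : A.trace = 0 := by
      rw [hA, trace_add, trace_smul, trace_sub, trace_companionMatrix _ ⟨N - 1, by omega⟩ rfl,
        show M.trace = 0 from hM]
      simp
    obtain ⟨c, hc⟩ := mul_krylovMatrix h0 hs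
    set K := krylovMatrix h0 A
    have hu : IsUnit K.det := isUnit_iff_ne_zero.mpr hs
    have hA' : A = K * companionMatrix c * K⁻¹ := by
      rw [← hc, Matrix.mul_assoc, mul_nonsing_inv _ hu, Matrix.mul_one]
    have hlast : c ⟨N - 1, by omega⟩ = 0 := by
      rw [← trace_companionMatrix c _ rfl, ← htr, hA', trace_mul_comm, ← Matrix.mul_assoc,
        nonsing_inv_mul _ hu, Matrix.one_mul]
    rw [hA']
    exact conj_mem_zClosure _ _ (fun x hx => hconj _ _ x (nonsing_inv_mul _ hu) hx) (hS c hlast)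

end Companion

section Decomposition

variable {k : Type*} [Field k] {N p : ℕ} {lam : Fin p → ℕ}

/-- The summand of the companion matrix sending the basis vectors with the parity of the last one
to those of the other parity. -/
def companionCross (c : ℕ → k) : Matrix (Fin N) (Fin N) k :=
  of fun a b => if (b : ℕ) % 2 = N % 2 then 0
    else if (b : ℕ) = N - 1 then (if (a : ℕ) % 2 = N % 2 then c a else 0)
    else (if (a : ℕ) = b + 1 then 1 else 0)

/-- The complement of `companionCross` in the companion matrix. -/
def companionRest (c : ℕ → k) : Matrix (Fin N) (Fin N) k :=
  of fun a b => if (b : ℕ) % 2 = N % 2 then (if (a : ℕ) = b + 1 then 1 else 0)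
    else if (b : ℕ) = N - 1 then (if (a : ℕ) % 2 = N % 2 then 0 else c a)
    else 0

theorem companionCross_add_companionRest (c : ℕ → k) :
    companionCross c + companionRest c = companionMatrix fun a : Fin N => c a := by
  ext a b
  have := b.isLt
  rw [Matrix.add_apply, companionCross, companionRest, companionMatrix, of_apply, of_apply,
    of_apply]
  by_cases hb : (b : ℕ) + 1 < N
  · rw [if_pos hb, if_neg (c := (b : ℕ) = N - 1) (by omega),
      if_neg (c := (b : ℕ) = N - 1) (by omega)]
    split_ifs <;> simp
  · rw [if_neg hb, if_pos (c := (b : ℕ) = N - 1) (by omega),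
      if_pos (c := (b : ℕ) = N - 1) (by omega), if_neg (c := (b : ℕ) % 2 = N % 2) (by omega),
      if_neg (c := (b : ℕ) % 2 = N % 2) (by omega)]
    split_ifs <;> simp

theorem companionCross_mem_zClosure [Infinite k] (hsum : ∑ l, lam l = N) (hp : 2 * p ≤ N)
    {l₀ : Fin p} (hl₀ : 3 ≤ lam l₀) (c : ℕ → k) :
    companionCross c ∈ zClosure (jordanOrbit k N lam) := by
  refine mem_zClosure_of_positions hsum hp hl₀
    (fun j => if j % 2 = N % 2 then (N + 1) / 2 + j / 2 else if j = N - 1 then 0 else j / 2 + 1)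
    ?_ ?_ ?_
  · intro a ha
    split_ifs <;> omega
  · intro a ha b hb hab
    split_ifs at hab <;> omega
  · intro a b hab
    left
    have := a.isLt
    have := b.isLt
    rw [companionCross, of_apply] at hab
    split_ifs at hab ⊢ <;> first | omega | exact absurd rfl hab

/-- The Jordan form of `companionRest c` for generic `c`. -/
def restShift (k : Type*) [Field k] (N : ℕ) : Matrix (Fin N) (Fin N) k :=
  of fun a b => if ((b : ℕ) % 2 = N % 2 ∧ (a : ℕ) = b + 1) ∨
    ((b : ℕ) = N - 1 ∧ (a : ℕ) = (N + 1) % 2) then 1 else 0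

theorem restShift_mem_zClosure [Infinite k] (hN : 3 ≤ N) (hsum : ∑ l, lam l = N)
    (hp : 2 * p ≤ N) {l₀ : Fin p} (hl₀ : 3 ≤ lam l₀) :
    restShift k N ∈ zClosure (jordanOrbit k N lam) := by
  refine mem_zClosure_of_positions hsum hp hl₀
    (fun j => if j % 2 = N % 2 then
        (if j = N - 2 then 0 else if j = 0 then N / 2 - 1 else (j + 1) / 2)
      else (if j = (N + 1) % 2 then N - 1 else if j = N - 1 then N / 2 else N / 2 + j / 2))
    ?_ ?_ ?_
  · intro a ha
    split_ifs <;> omega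
  · intro a ha b hb hab
    split_ifs at hab <;> omega
  · intro a b hab
    have := a.isLt
    have := b.isLt
    rw [restShift, of_apply, ne_eq, ite_eq_right_iff, not_forall] at hab
    obtain ⟨hab, -⟩ := hab
    split_ifs <;> omega

/-- The change of basis bringing `companionRest c` to the form `restShift`. -/
def restBasis (N : ℕ) (c : ℕ → k) : Matrix (Fin N) (Fin N) k :=
  of fun a b => if (b : ℕ) = (N + 1) % 2 then (if (a : ℕ) % 2 = N % 2 then 0 else c a)
    else if (b : ℕ) + 1 = (N + 1) % 2 then (if (a : ℕ) % 2 = N % 2 then c (a + 1) else 0)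
    else (if a = b then 1 else 0)

theorem det_restBasis_ne_zero {c : ℕ → k} (hc : c ((N + 1) % 2) ≠ 0) :
    (restBasis N c).det ≠ 0 := by
  rw [det_of_isLowerTriangular]
  · refine Finset.prod_ne_zero_iff.mpr fun a _ => ?_
    rw [restBasis, of_apply]
    split_ifs with h1 h2 h3 h4
    · omega
    · rwa [h1]
    · rwa [h3]
    · omega
    · exact one_ne_zero
    · exact absurd rfl ‹_›
  · intro a b hab
    have hab' : (a : ℕ) < b := hab
    rw [restBasis, of_apply]
    split_ifs with h1 h2 h3 h4 h5 <;> first | rfl | omega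

theorem companionRest_mul_restBasis (hN : 3 ≤ N) {c : ℕ → k} (hc : c (N - 1) = 0) :
    companionRest c * restBasis N c = restBasis N c * restShift k N := by
  ext a b
  have ha := a.isLt
  have hb := b.isLt
  have hR : (restBasis N c * restShift k N) a b =
      if h : (b : ℕ) % 2 = N % 2 then restBasis N c a ⟨b + 1, by omega⟩
      else if (b : ℕ) = N - 1 then restBasis N c a ⟨(N + 1) % 2, by omega⟩ else 0 := by
    rw [mul_apply]
    split_ifs with h1 h2
    · rw [Finset.sum_eq_single ⟨b + 1, by omega⟩]
      · rw [restShift, of_apply, if_pos (Or.inl ⟨h1, rfl⟩), mul_one]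
      · intro j _ hj
        rw [restShift, of_apply, if_neg, mul_zero]
        rintro (⟨-, h⟩ | ⟨h, -⟩)
        · exact hj (Fin.ext h)
        · omega
      · simp
    · rw [Finset.sum_eq_single ⟨(N + 1) % 2, by omega⟩]
      · rw [restShift, of_apply, if_pos (Or.inr ⟨h2, rfl⟩), mul_one]
      · intro j _ hj
        rw [restShift, of_apply, if_neg, mul_zero]
        rintro (⟨h, -⟩ | ⟨-, h⟩)
        · exact h1 h
        · exact hj (Fin.ext h)
      · simp
    · refine Finset.sum_eq_zero fun j _ => ?_
      rw [restShift, of_apply, if_neg, mul_zero]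
      omega
  rw [hR, mul_apply]
  by_cases hbq : (b : ℕ) = (N + 1) % 2
  · rw [dif_neg (by omega), if_neg (by omega)]
    refine Finset.sum_eq_zero fun j _ => ?_
    rw [companionRest, restBasis, of_apply, of_apply, if_pos hbq]
    split_ifs with h1 h2 h3 h4 <;> simp_all
  by_cases hbq' : (b : ℕ) + 1 = (N + 1) % 2
  · rw [dif_pos (by omega), restBasis, of_apply, if_pos hbq']
    by_cases hpar : (a : ℕ) % 2 = N % 2
    · rw [if_pos hpar]
      refine Finset.sum_eq_zero fun j _ => ?_
      rw [companionRest, of_apply, of_apply, if_neg hbq, if_pos hbq']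
      split_ifs <;> first | omega | simp
    · rw [if_neg hpar, Finset.sum_eq_single ⟨a - 1, by omega⟩]
      · rw [companionRest, of_apply, of_apply, if_neg hbq, if_pos hbq']
        dsimp only
        rw [if_pos (by omega), if_pos (by omega), if_pos (by omega), one_mul,
          Nat.sub_add_cancel (by omega)]
      · intro j _ hj
        have hj' : (j : ℕ) ≠ a - 1 := fun h => hj (Fin.ext h)
        rw [companionRest, of_apply, of_apply, if_neg hbq, if_pos hbq']
        split_ifs <;> first | omega | simp
      · simp
  · rw [Finset.sum_eq_single b]
    · simp only [companionRest, restBasis, of_apply, if_neg hbq, if_neg hbq', if_true, mul_one,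
        Fin.ext_iff]
      split_ifs <;> first | omega | rfl
    · intro j _ hj
      rw [restBasis, of_apply, if_neg hbq, if_neg hbq', if_neg hj, mul_zero]
    · simp

theorem companionMatrix_mem_zClosure_of_ne_zero [Infinite k] (hN : 3 ≤ N)
    (hsum : ∑ l, lam l = N) (hp : 2 * p ≤ N) {l₀ : Fin p} (hl₀ : 3 ≤ lam l₀) {c : ℕ → k}
    (hlast : c (N - 1) = 0) (hc : c ((N + 1) % 2) ≠ 0) :
    (companionMatrix fun a : Fin N => c a) ∈
      zClosure (Set.image2 (· + ·) (jordanOrbit k N lam) (jordanOrbit k N lam)) := by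
  rw [← companionCross_add_companionRest]
  exact add_mem_zClosure_image2 (companionCross_mem_zClosure hsum hp hl₀ c)
    (conj_mem_zClosure_jordanOrbit (det_restBasis_ne_zero hc)
      (restShift_mem_zClosure hN hsum hp hl₀) (companionRest_mul_restBasis hN hlast))

theorem companionMatrix_mem_zClosure [Infinite k] (hN : 3 ≤ N)
    (hsum : ∑ l, lam l = N) (hp : 2 * p ≤ N) {l₀ : Fin p} (hl₀ : 3 ≤ lam l₀) (c : Fin N → k)
    (hlast : c ⟨N - 1, by omega⟩ = 0) :
    companionMatrix c ∈
      zClosure (Set.image2 (· + ·) (jordanOrbit k N lam) (jordanOrbit k N lam)) := by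
  have hq : (N + 1) % 2 < N := by omega
  let q : Fin N := ⟨(N + 1) % 2, hq⟩
  let last : Fin N := ⟨N - 1, by omega⟩
  have hql : q ≠ last := fun h => by
    have : (N + 1) % 2 = N - 1 := congrArg Fin.val h
    omega
  refine zClosure_subset_of_subset subset_rfl ?_
  refine mem_zClosure_of_line (companionMatrix (Function.update c q 1)) (companionMatrix c)
    (MvPolynomial.X (q, last)) ?_ ?_
  · have hnot : ¬ (last : ℕ) + 1 < N := by
      simp only [last]
      omega
    simp [companionMatrix, hnot]
  · intro s hs
    let d : Fin N → k := Function.update c q 1 + s • (c - Function.update c q 1)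
    have hd : companionMatrix (Function.update c q 1) +
        s • (companionMatrix c - companionMatrix (Function.update c q 1)) = companionMatrix d := by
      ext a b
      simp only [companionMatrix, d, Matrix.add_apply, Matrix.smul_apply, Matrix.sub_apply,
        of_apply, Pi.add_apply, Pi.smul_apply, Pi.sub_apply]
      split_ifs <;> simp
    rw [hd] at hs ⊢
    have hdq : d q ≠ 0 := by
      have hnot : ¬ (last : ℕ) + 1 < N := by
        simp only [last]
        omega
      simpa [companionMatrix, hnot] using hs
    have hdl : d last = 0 := by
      have : c last = 0 := hlast
      simp [d, Function.update_of_ne hql.symm, this]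
    have h := companionMatrix_mem_zClosure_of_ne_zero hN hsum hp hl₀
      (c := fun j => if h : j < N then d ⟨j, h⟩ else 0)
      (by rw [dif_pos (by omega)]; exact hdl) (by rw [dif_pos hq]; exact hdq)
    simpa using h

end Decomposition

/-- If `λ₁ ≥ 3` and `2(N − p) ≥ N`, then the conical secant variety of the nilpotent
orbit `O_λ ⊂ sl_N` is all of `sl_N`. -/
theorem stmt0 {k : Type*} [Field k] [IsAlgClosed k] [CharZero k]
    {N p : ℕ} (hN : 2 ≤ N) (hp : 0 < p) (lam : Fin p → ℕ)
    (hanti : Antitone lam) (hpos : ∀ l, 1 ≤ lam l)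
    (hsum : ∑ l, lam l = N)
    (hl1 : 3 ≤ lam ⟨0, hp⟩)
    (hhalf : N ≤ 2 * (N - p)) :
    zClosure (Set.image2 (· + ·) (jordanOrbit k N lam) (jordanOrbit k N lam))
      = {M : Matrix (Fin N) (Fin N) k | Matrix.trace M = 0} := by
  have hN3 : 3 ≤ N :=
    hl1.trans (hsum ▸ Finset.single_le_sum (f := lam) (fun _ _ => Nat.zero_le _)
      (Finset.mem_univ _))
  have hpN : 2 * p ≤ N := by
    have : p ≤ N := by
      have := Finset.sum_le_sum fun l (_ : l ∈ Finset.univ) => hpos l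
      rw [hsum] at this
      simpa using this
    omega
  refine Set.Subset.antisymm zClosure_add_subset_trace
    (trace_eq_zero_subset_zClosure hN ?_ fun c hc =>
      companionMatrix_mem_zClosure hN3 hsum hpN hl1 c hc)
  rintro g g' _ hg ⟨x, hx, y, hy, rfl⟩
  refine ⟨_, conj_mem_jordanOrbit hg hx, _, conj_mem_jordanOrbit hg hy, ?_⟩
  simp only [Matrix.mul_add, Matrix.add_mul]
end
end

section
/- Let k be an algebraically closed field of characteristic 0, and let λ = (2^r, 1^{N−2r}) with 1 ≤ r and 2r ≤ N. Then the Zariski closure in Mat_N(k) of the set {x + y : x, y ∈ O_λ} equals the set of matrices M ∈ Mat_N(k) such that rank(M) ≤ 2r and the coefficients of the characteristic polynomial of M in degrees N−1, N−3, …, N−2r+1 all vanish (equivalently, σ₁(M) = σ₃(M) = … = σ_{2r−1}(M) = 0, where σ_i are the elementary symmetric functions of the eigenvalues). -/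
open Matrix

noncomputable section

/-- The partition `(2^r, 1^{N-2r})` of `N`, with `N - r` parts. -/
def twoOneLam (N r : ℕ) : Fin (N - r) → ℕ := fun l => if (l : ℕ) < r then 2 else 1

theorem mem_jordanOrbit_twoOneLam_iff {k : Type*} [Field k] {N r : ℕ} (h2r : 2 * r ≤ N)
    (x : Matrix (Fin N) (Fin N) k) :
    x ∈ jordanOrbit k N (twoOneLam N r) ↔ x.rank = r ∧ x * x = 0 := by
  have hone : ∑ l, (twoOneLam N r l - 1) = r := by
    have hcount : ∀ l : Fin (N - r), twoOneLam N r l - 1 = if (l : ℕ) < r then 1 else 0 := by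
      intro l
      unfold twoOneLam
      split_ifs <;> rfl
    rw [Finset.sum_congr rfl fun l _ => hcount l,
      Fin.sum_univ_eq_sum_range (fun l => if l < r then 1 else 0) (N - r), Finset.sum_boole]
    have : (Finset.range (N - r)).filter (· < r) = Finset.range r := by
      ext l
      simp only [Finset.mem_filter, Finset.mem_range]
      omega
    simp [this]
  have htwo : ∀ i, 2 ≤ i → ∑ l, (twoOneLam N r l - i) = 0 := by
    intro i hi
    refine Finset.sum_eq_zero fun l _ => ?_
    unfold twoOneLam
    split_ifs <;> omega
  constructor
  · intro h
    refine ⟨by simpa [hone] using h 1 le_rfl, ?_⟩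
    have h2 := h 2 (by norm_num)
    rw [htwo 2 le_rfl, pow_two, Matrix.rank, Submodule.finrank_eq_zero, LinearMap.range_eq_bot,
      ← Matrix.toLin'_apply', LinearEquiv.map_eq_zero_iff] at h2
    exact h2
  · rintro ⟨hrank, hsq⟩ i hi
    rcases hi.eq_or_lt with rfl | hi
    · rw [pow_one, hrank, hone]
    · rw [htwo i hi, pow_eq_zero_of_le hi (by rw [pow_two, hsq]), Matrix.rank_zero]

section SquareZero

open Polynomial

variable {R : Type*} [CommRing R] [IsDomain R] {n : Type*} [Fintype n] [DecidableEq n]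

theorem charpoly_of_mul_self_eq_zero {x : Matrix n n R} (hx : x * x = 0) :
    x.charpoly = X ^ Fintype.card n := by
  have hnil : IsNilpotent x := ⟨2, by rw [pow_two, hx]⟩
  exact sub_eq_zero.mp (Matrix.isNilpotent_charpoly_sub_pow_of_isNilpotent hnil).eq_zero

theorem X_pow_mul_charpoly_add_of_mul_self_eq_zero {x y : Matrix n n R}
    (hx : x * x = 0) (hy : y * y = 0) :
    X ^ Fintype.card n * (x + y).charpoly = expand R 2 (x * y).charpoly := by
  have hneg : (-x) * (-x) = 0 := by rw [neg_mul_neg, hx]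
  have hX : (x + y).charmatrix = scalar n X - (x.map C + y.map C) := by
    simp [charmatrix, Matrix.map_add]
  have hexp : expand R 2 (x * y).charpoly = (scalar n (X ^ 2) - x.map C * y.map C).det := by
    rw [Matrix.charpoly, AlgHom.map_det]
    congr 1
    ext i j : 2
    simp only [AlgHom.mapMatrix_apply, Matrix.map_apply, charmatrix_apply, Matrix.sub_apply,
      map_sub, expand_C, Matrix.scalar_apply, Matrix.diagonal_apply, ← Matrix.map_mul]
    split_ifs <;> simp
  have hx' : x.map (C : R →+* R[X]) * x.map C = 0 := by
    rw [← Matrix.map_mul, hx, Matrix.map_zero _ (map_zero C)]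
  have hy' : y.map (C : R →+* R[X]) * y.map C = 0 := by
    rw [← Matrix.map_mul, hy, Matrix.map_zero _ (map_zero C)]
  have key : scalar n X * ((-x).charmatrix * (x + y).charmatrix)
      = (scalar n (X ^ 2) - x.map C * y.map C) * y.charmatrix := by
    have hnx : (-x).charmatrix = scalar n X + x.map C := by
      simp [charmatrix, sub_eq_add_neg, Matrix.map_neg]
    have hyc : y.charmatrix = scalar n X - y.map C := by simp [charmatrix]
    rw [hX, hnx, hyc]
    generalize x.map (C : R →+* R[X]) = a at *
    generalize y.map (C : R →+* R[X]) = b at *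
    have ha : a * scalar n X = scalar n X * a := (scalar_comm _ (fun _ => Commute.all _ _) _).symm
    have hb : b * scalar n X = scalar n X * b := (scalar_comm _ (fun _ => Commute.all _ _) _).symm
    rw [map_pow]
    generalize scalar n (X : R[X]) = s at *
    have habs : a * b * s = s * (a * b) := by rw [mul_assoc, hb, ← mul_assoc, ha, mul_assoc]
    have e1 : s * ((s + a) * (s - (a + b))) = s * (s * s) - s * (s * b) - s * (a * b) := by
      simp only [add_mul, mul_add, mul_sub, ha, hx', mul_zero]
      abel
    have e2 : (s ^ 2 - a * b) * (s - b) = s * (s * s) - s * (s * b) - s * (a * b) := by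
      simp only [sub_mul, mul_sub, habs, pow_two, mul_assoc, hy', mul_zero]
      abel
    rw [e1, e2]
  have hdet := congrArg det key
  rw [det_mul, det_mul, det_mul, ← hexp] at hdet
  change _ * ((-x).charpoly * (x + y).charpoly) = _ * y.charpoly at hdet
  rw [charpoly_of_mul_self_eq_zero hneg, charpoly_of_mul_self_eq_zero hy] at hdet
  have hs : (scalar n (X : R[X])).det = X ^ Fintype.card n := by simp
  rw [hs, mul_comm] at hdet
  exact mul_right_cancel₀ (pow_ne_zero _ X_ne_zero) hdet

theorem charpoly_add_coeff_eq_zero_of_mul_self_eq_zero {x y : Matrix n n R}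
    (hx : x * x = 0) (hy : y * y = 0) {j : ℕ} (hj : ¬ 2 ∣ j + Fintype.card n) :
    (x + y).charpoly.coeff j = 0 := by
  rw [← coeff_X_pow_mul (x + y).charpoly (Fintype.card n) j,
    X_pow_mul_charpoly_add_of_mul_self_eq_zero hx hy, coeff_expand two_pos, if_neg hj]

end SquareZero

section Closed

variable {k : Type*} [Field k] {N : ℕ} {S : Set (Matrix (Fin N) (Fin N) k)}
  {M : Matrix (Fin N) (Fin N) k}

theorem charpoly_coeff_eq_zero_of_mem_zClosure (hM : M ∈ zClosure S) {j : ℕ}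
    (hS : ∀ x ∈ S, x.charpoly.coeff j = 0) : M.charpoly.coeff j = 0 := by
  have heval : ∀ x : Matrix (Fin N) (Fin N) k,
      MvPolynomial.eval (fun q => x q.1 q.2) ((mvPolynomialX (Fin N) (Fin N) k).charpoly.coeff j)
        = x.charpoly.coeff j := by
    intro x
    have h := mvPolynomialX_mapMatrix_eval x
    rw [RingHom.mapMatrix_apply] at h
    conv_rhs => rw [← h, charpoly_map, Polynomial.coeff_map]
  rw [← heval]
  exact hM _ fun x hx => by rw [heval, hS x hx]

theorem exists_mul_mul_eq_one {m : Type*} [Fintype m] [DecidableEq m] (M : Matrix m m k) :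
    ∃ (P : Matrix (Fin M.rank) m k) (Q : Matrix m (Fin M.rank) k), P * M * Q = 1 := by
  obtain ⟨V, U, e, -, -, h⟩ := exists_rank_normal_form M
  refine ⟨V.submatrix (e.symm ∘ Sum.inl) id, U.submatrix id (e.symm ∘ Sum.inl), ?_⟩
  have h' := congrArg (fun A => A.submatrix (e.symm ∘ Sum.inl) (e.symm ∘ Sum.inl)) h
  have hone : (1 : Matrix (Fin M.rank) (Fin M.rank) k)
      = ((fromBlocks 1 0 0 0).submatrix e e).submatrix (e.symm ∘ Sum.inl) (e.symm ∘ Sum.inl) := by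
    ext i j
    simp
  rw [hone, ← h]
  ext i j
  simp [Matrix.mul_apply]

theorem rank_le_of_mem_zClosure (hM : M ∈ zClosure S) {s : ℕ} (hS : ∀ x ∈ S, x.rank ≤ s) :
    M.rank ≤ s := by
  by_contra! hlt
  obtain ⟨P, Q, hPQ⟩ := exists_mul_mul_eq_one M
  let P' : Matrix (Fin M.rank) (Fin N) (MvPolynomial (Fin N × Fin N) k) := P.map MvPolynomial.C
  let Q' : Matrix (Fin N) (Fin M.rank) (MvPolynomial (Fin N × Fin N) k) := Q.map MvPolynomial.C
  have heval : ∀ x : Matrix (Fin N) (Fin N) k,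
      MvPolynomial.eval (fun q => x q.1 q.2) (P' * mvPolynomialX (Fin N) (Fin N) k * Q').det
        = (P * x * Q).det := by
    intro x
    rw [RingHom.map_det]
    congr 1
    ext i j
    simp [P', Q', Matrix.mul_apply]
  have hzero := hM _ fun x hx => by
    rw [heval]
    by_contra hdet
    have hfull := rank_of_det_ne_zero hdet
    rw [Fintype.card_fin] at hfull
    have hle := (rank_mul_le_left (P * x) Q).trans ((rank_mul_le_right P x).trans (hS x hx))
    omega
  rw [heval, hPQ, det_one] at hzero
  exact one_ne_zero hzero

end Closed

theorem Matrix.rank_add_le {k m n : Type*} [Field k] [Fintype m] [Fintype n]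
    (A B : Matrix m n k) : (A + B).rank ≤ A.rank + B.rank := by
  unfold Matrix.rank
  rw [mulVecLin_add]
  exact (Submodule.finrank_mono (LinearMap.range_add_le _ _)).trans
    (Submodule.finrank_add_le_finrank_add_finrank _ _)

theorem zClosure_image2_add_subset {k : Type*} [Field k] {N r : ℕ} (h2r : 2 * r ≤ N) :
    zClosure (Set.image2 (· + ·) (jordanOrbit k N (twoOneLam N r))
        (jordanOrbit k N (twoOneLam N r)))
      ⊆ {M : Matrix (Fin N) (Fin N) k | M.rank ≤ 2 * r ∧
          ∀ i : ℕ, 1 ≤ i → i ≤ r → (Matrix.charpoly M).coeff (N - (2 * i - 1)) = 0} := by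
  intro M hM
  refine ⟨rank_le_of_mem_zClosure hM ?_,
    fun i hi hir => charpoly_coeff_eq_zero_of_mem_zClosure hM ?_⟩
  · rintro _ ⟨x, hx, y, hy, rfl⟩
    have hx := ((mem_jordanOrbit_twoOneLam_iff h2r x).mp hx).1
    have hy := ((mem_jordanOrbit_twoOneLam_iff h2r y).mp hy).1
    have := Matrix.rank_add_le x y
    dsimp only
    omega
  · rintro _ ⟨x, hx, y, hy, rfl⟩
    refine charpoly_add_coeff_eq_zero_of_mul_self_eq_zero
      ((mem_jordanOrbit_twoOneLam_iff h2r x).mp hx).2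
      ((mem_jordanOrbit_twoOneLam_iff h2r y).mp hy).2 ?_
    rw [Fintype.card_fin]
    omega

section Perturbation

open Polynomial

variable {k : Type*} [Field k]

theorem exists_isUnit_col_eq {n : ℕ} {v : Fin (n + 1) → k} (hv : v ≠ 0) :
    ∃ P : Matrix (Fin (n + 1)) (Fin (n + 1)) k, IsUnit P.det ∧ P.col 0 = v := by
  obtain ⟨j, hj⟩ := Function.ne_iff.mp hv
  refine ⟨(updateCol 1 j v).submatrix id (Equiv.swap 0 j), ?_, ?_⟩
  · rw [det_permute']
    refine IsUnit.mul ?_ ?_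
    · exact (Units.isUnit _).map (Int.castRingHom k)
    · rw [← cramer_apply, cramer_one, isUnit_iff_ne_zero]
      exact hj
  · ext i
    simp [Matrix.col]

/-- `D` has a perturbation direction moving its eigenvalues `d` linearly with speeds `e`. -/
def HasLinearSpectralPerturbation {n : Type*} [Fintype n] [DecidableEq n] (D : Matrix n n k)
    (d e : n → k) : Prop :=
  ∃ E : Matrix n n k, ∀ t : k, (D + t • E).charpoly = ∏ i, (X - C (d i + t * e i))

theorem HasLinearSpectralPerturbation.of_reindex {m n : Type*} [Fintype m] [DecidableEq m]
    [Fintype n] [DecidableEq n] (f : m ≃ n) {D : Matrix m m k} {d e : m → k}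
    (h : HasLinearSpectralPerturbation (reindex f f D) (d ∘ f.symm) (e ∘ f.symm)) :
    HasLinearSpectralPerturbation D d e := by
  obtain ⟨E, hE⟩ := h
  refine ⟨(reindex f f).symm E, fun t => ?_⟩
  have hsum : reindex f f (D + t • (reindex f f).symm E) = reindex f f D + t • E := by
    ext i j
    simp
  rw [← charpoly_reindex f, hsum, hE, ← f.symm.prod_comp]
  rfl

theorem HasLinearSpectralPerturbation.of_conj {n : Type*} [Fintype n] [DecidableEq n]
    {P D : Matrix n n k} (hP : IsUnit P.det) {d e : n → k}
    (h : HasLinearSpectralPerturbation (P⁻¹ * D * P) d e) :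
    HasLinearSpectralPerturbation D d e := by
  obtain ⟨E, hE⟩ := h
  refine ⟨P * E * P⁻¹, fun t => ?_⟩
  rw [← hE]
  have hsum : P⁻¹ * D * P + t • E = P⁻¹ * ((D + t • (P * E * P⁻¹)) * P) := by
    simp only [add_mul, mul_add, smul_mul_assoc, mul_smul_comm, ← mul_assoc,
      nonsing_inv_mul _ hP, one_mul]
    rw [mul_assoc E, nonsing_inv_mul _ hP, mul_one]
  rw [hsum, charpoly_mul_comm, mul_nonsing_inv_cancel_right _ _ hP]

theorem hasLinearSpectralPerturbation_fin {n : ℕ} (D : Matrix (Fin n) (Fin n) k)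
    (d e : Fin n → k) (hD : D.charpoly = ∏ i, (X - C (d i))) :
    HasLinearSpectralPerturbation D d e := by
  induction n with
  | zero => exact ⟨0, fun t => by simp⟩
  | succ n ih =>
    have hroot : (scalar (Fin (n + 1)) (d 0) - D).det = 0 := by
      rw [← eval_charpoly, hD, eval_prod]
      exact Finset.prod_eq_zero (Finset.mem_univ 0) (by simp)
    obtain ⟨v, hv, hDv⟩ := exists_mulVec_eq_zero_iff.mpr hroot
    have hDv : D *ᵥ v = d 0 • v := by
      rw [sub_mulVec, sub_eq_zero] at hDv
      rw [← hDv]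
      ext i
      simp [mulVec_diagonal]
    obtain ⟨P, hP, hPv⟩ := exists_isUnit_col_eq hv
    let f : Fin (n + 1) ≃ Fin n ⊕ Unit := (finSuccEquiv n).trans (Equiv.optionEquivSumPUnit _)
    have hf_inl : ∀ i, f.symm (Sum.inl i) = i.succ := fun i => by simp [f]
    have hf_inr : ∀ u, f.symm (Sum.inr u) = 0 := fun u => by simp [f]
    refine .of_conj hP (.of_reindex f ?_)
    set A := reindex f f (P⁻¹ * D * P) with hA
    have hcol : ∀ i, (P⁻¹ * D * P) i 0 = if i = 0 then d 0 else 0 := by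
      intro i
      have hPe : P *ᵥ Pi.single 0 1 = v := by rw [mulVec_single_one, hPv]
      have : (P⁻¹ * D * P) *ᵥ Pi.single 0 1 = d 0 • Pi.single 0 1 := by
        rw [← mulVec_mulVec, ← mulVec_mulVec, hPe, hDv, mulVec_smul, ← hPe, mulVec_mulVec,
          nonsing_inv_mul _ hP, one_mulVec]
      rw [mulVec_single_one] at this
      simpa [Pi.single_apply] using congrFun this i
    have hblocks : A = fromBlocks A.toBlocks₁₁ 0 A.toBlocks₂₁ (diagonal fun _ => d 0) := by
      conv_lhs => rw [← fromBlocks_toBlocks A]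
      congr 1
      · ext i j
        simp [toBlocks₁₂, hA, hf_inl, hf_inr, hcol]
      · ext i j
        simp [toBlocks₂₂, hA, hf_inr, hcol]
    have hchar : A.toBlocks₁₁.charpoly = ∏ i, (X - C (d (Fin.succ i))) := by
      have hAD : A.charpoly = D.charpoly := by
        rw [hA, charpoly_reindex, mul_assoc, charpoly_mul_comm,
          mul_nonsing_inv_cancel_right _ _ hP]
      rw [hblocks, charpoly_fromBlocks_zero₁₂, charpoly_diagonal, hD, Fin.prod_univ_succ,
        mul_comm] at hAD
      simp only [Finset.univ_unique, Finset.prod_singleton] at hAD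
      exact mul_left_cancel₀ (X_sub_C_ne_zero _) hAD
    obtain ⟨E, hE⟩ := ih A.toBlocks₁₁ (d ∘ Fin.succ) (e ∘ Fin.succ) hchar
    refine ⟨fromBlocks E 0 0 (diagonal fun _ => e 0), fun t => ?_⟩
    rw [hblocks, fromBlocks_smul, fromBlocks_add]
    simp only [smul_zero, add_zero, charpoly_fromBlocks_zero₁₂, hE, ← diagonal_smul,
      diagonal_add, charpoly_diagonal, Fintype.prod_sum_type]
    simp [hf_inl, hf_inr]

theorem hasLinearSpectralPerturbation {n : Type*} [Fintype n] [DecidableEq n]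
    (D : Matrix n n k) (d e : n → k) (hD : D.charpoly = ∏ i, (X - C (d i))) :
    HasLinearSpectralPerturbation D d e := by
  refine .of_reindex (Fintype.equivFin n) (hasLinearSpectralPerturbation_fin _ _ _ ?_)
  rw [charpoly_reindex, hD, ← (Fintype.equivFin n).symm.prod_comp]
  rfl

end Perturbation

section Generic

open Polynomial

variable {k : Type*} [Field k]

theorem exists_eq_conj_diagonal {n : Type*} [Fintype n] [DecidableEq n] {A : Matrix n n k}
    {d : n → k} (hd : Function.Injective d) (hA : A.charpoly = ∏ i, (X - C (d i))) :
    ∃ W : Matrix n n k, IsUnit W.det ∧ A = W * diagonal d * W⁻¹ := by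
  have hex : ∀ i, ∃ v : n → k, v ≠ 0 ∧ A *ᵥ v = d i • v := by
    intro i
    have hroot : (scalar n (d i) - A).det = 0 := by
      rw [← eval_charpoly, hA, eval_prod]
      exact Finset.prod_eq_zero (Finset.mem_univ i) (by simp)
    obtain ⟨v, hv, hAv⟩ := exists_mulVec_eq_zero_iff.mpr hroot
    refine ⟨v, hv, ?_⟩
    rw [sub_mulVec, sub_eq_zero] at hAv
    rw [← hAv]
    ext i
    simp [mulVec_diagonal]
  choose v hv hAv using hex
  have hli : LinearIndependent k v :=
    Module.End.eigenvectors_linearIndependent' (toLin' A) d hd v fun i =>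
      ⟨Module.End.mem_eigenspace_iff.mpr (by rw [toLin'_apply, hAv]), hv i⟩
  have hW : IsUnit ((of v)ᵀ).det := by
    rw [← isUnit_iff_isUnit_det, ← linearIndependent_cols_iff_isUnit]
    exact hli
  refine ⟨(of v)ᵀ, hW, ?_⟩
  have hAW : A * (of v)ᵀ = (of v)ᵀ * diagonal d := by
    ext i j
    rw [mul_diagonal, transpose_apply, of_apply, mul_comm]
    exact congrFun (hAv j) i
  rw [← hAW, mul_nonsing_inv_cancel_right _ _ hW]

theorem exists_diagonal_conj_antidiagonal [CharZero k] {n : Type*} [Fintype n] [DecidableEq n]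
    (b : n → k) : ∃ Q : Matrix (n ⊕ n) (n ⊕ n) k, IsUnit Q.det ∧
      diagonal (Sum.elim b (-b)) = Q * fromBlocks 0 (diagonal b) (diagonal b) 0 * Q⁻¹ := by
  have h2 : (2 : k) ≠ 0 := two_ne_zero
  have hQQ : (fromBlocks 1 1 1 (-1) : Matrix (n ⊕ n) (n ⊕ n) k) * fromBlocks 1 1 1 (-1)
      = (2 : k) • 1 := by
    rw [fromBlocks_multiply, ← fromBlocks_one, fromBlocks_smul]
    simp [two_smul]
  have hQ : IsUnit (fromBlocks 1 1 1 (-1) : Matrix (n ⊕ n) (n ⊕ n) k).det := by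
    rw [isUnit_iff_ne_zero]
    intro h0
    have := congrArg det hQQ
    rw [det_mul, h0, zero_mul, det_smul, det_one, mul_one] at this
    exact pow_ne_zero _ h2 this.symm
  refine ⟨fromBlocks 1 1 1 (-1), hQ, ?_⟩
  have hcomm : diagonal (Sum.elim b (-b)) * fromBlocks 1 1 1 (-1)
      = fromBlocks 1 1 1 (-1) * fromBlocks 0 (diagonal b) (diagonal b) 0 := by
    rw [← fromBlocks_diagonal, fromBlocks_multiply, fromBlocks_multiply]
    simp
  rw [← hcomm, mul_nonsing_inv_cancel_right _ _ hQ]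

theorem rank_mul_mul_eq_of_mul_eq_one {l m n o : Type*} [Fintype l] [Fintype m] [Fintype n]
    [Fintype o] [DecidableEq m] [DecidableEq n] {P : Matrix m l k} {U : Matrix l m k}
    {V : Matrix n o k} {Q : Matrix o n k} (hU : P * U = 1) (hV : V * Q = 1) (G : Matrix m n k) :
    (U * G * V).rank = G.rank := by
  apply le_antisymm
  · exact (rank_mul_le_left _ _).trans (rank_mul_le_right _ _)
  · have hG : G = P * (U * G * V) * Q := by
      rw [← Matrix.mul_assoc, ← Matrix.mul_assoc, hU, Matrix.one_mul, Matrix.mul_assoc, hV,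
        Matrix.mul_one]
    conv_lhs => rw [hG]
    exact (rank_mul_le_left _ _).trans (rank_mul_le_right _ _)

theorem mul_add_mul_mem_image2_jordanOrbit {N r : ℕ} (h2r : 2 * r ≤ N) {b : Fin r → k}
    (hb : ∀ i, b i ≠ 0) {U : Matrix (Fin N) (Fin r ⊕ Fin r) k}
    {V : Matrix (Fin r ⊕ Fin r) (Fin N) k} (hVU : V * U = 1) :
    U * fromBlocks 0 (diagonal b) (diagonal b) 0 * V ∈
      Set.image2 (· + ·) (jordanOrbit k N (twoOneLam N r)) (jordanOrbit k N (twoOneLam N r)) := by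
  have hrank_diag : (diagonal b).rank = r := by
    rw [rank_of_det_ne_zero, Fintype.card_fin]
    rw [det_diagonal]
    exact Finset.prod_ne_zero_iff.mpr fun i _ => hb i
  have hsq : ∀ F : Matrix (Fin r ⊕ Fin r) (Fin r ⊕ Fin r) k, F * F = 0 →
      (U * F * V) * (U * F * V) = 0 := by
    intro F hF
    have : (U * F * V) * (U * F * V) = U * (F * (V * U) * F) * V := by
      simp only [Matrix.mul_assoc]
    rw [this, hVU, Matrix.mul_one, hF, Matrix.mul_zero, Matrix.zero_mul]
  have hmul : ∀ F : Matrix (Fin r ⊕ Fin r) (Fin r ⊕ Fin r) k, (U * F * V).rank = F.rank :=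
    rank_mul_mul_eq_of_mul_eq_one hVU hVU
  let F₁ : Matrix (Fin r ⊕ Fin r) (Fin r ⊕ Fin r) k := fromBlocks 0 (diagonal b) 0 0
  let F₂ : Matrix (Fin r ⊕ Fin r) (Fin r ⊕ Fin r) k := fromBlocks 0 0 (diagonal b) 0
  refine ⟨U * F₁ * V, ?_, U * F₂ * V, ?_, ?_⟩
  · refine (mem_jordanOrbit_twoOneLam_iff h2r _).mpr ⟨?_, hsq _ (by simp [F₁, fromBlocks_multiply])⟩
    have hF : F₁ = (fromRows 1 0 : Matrix (Fin r ⊕ Fin r) (Fin r) k) * diagonal b *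
        (fromCols 0 1 : Matrix (Fin r) (Fin r ⊕ Fin r) k) := by
      ext (i | i) (j | j) <;> simp [F₁, fromRows_mul, mul_fromCols]
    rw [hmul, hF, rank_mul_mul_eq_of_mul_eq_one (P := fromCols 1 0) (Q := fromRows 0 1), hrank_diag]
    · simp [fromCols_mul_fromRows]
    · simp [fromCols_mul_fromRows]
  · refine (mem_jordanOrbit_twoOneLam_iff h2r _).mpr ⟨?_, hsq _ (by simp [F₂, fromBlocks_multiply])⟩
    have hF : F₂ = (fromRows 0 1 : Matrix (Fin r ⊕ Fin r) (Fin r) k) * diagonal b *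
        (fromCols 1 0 : Matrix (Fin r) (Fin r ⊕ Fin r) k) := by
      ext (i | i) (j | j) <;> simp [F₂, fromRows_mul, mul_fromCols]
    rw [hmul, hF, rank_mul_mul_eq_of_mul_eq_one (P := fromCols 0 1) (Q := fromRows 1 0), hrank_diag]
    · simp [fromCols_mul_fromRows]
    · simp [fromCols_mul_fromRows]
  · dsimp only
    rw [← Matrix.add_mul, ← Matrix.mul_add, fromBlocks_add]
    simp only [add_zero, zero_add]

theorem mul_mem_image2_jordanOrbit [CharZero k] {N r : ℕ} (h2r : 2 * r ≤ N) {b : Fin r → k}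
    (hb : ∀ i, b i ≠ 0) (hinj : Function.Injective (Sum.elim b (-b)))
    {B : Matrix (Fin N) (Fin r ⊕ Fin r) k} {C' : Matrix (Fin r ⊕ Fin r) (Fin N) k}
    (hchar : (C' * B).charpoly = ∏ i, (X - C (Sum.elim b (-b) i))) :
    B * C' ∈
      Set.image2 (· + ·) (jordanOrbit k N (twoOneLam N r)) (jordanOrbit k N (twoOneLam N r)) := by
  obtain ⟨W, hW, hAW⟩ := exists_eq_conj_diagonal hinj hchar
  obtain ⟨Q, hQ, hdiag⟩ := exists_diagonal_conj_antidiagonal b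
  set F : Matrix (Fin r ⊕ Fin r) (Fin r ⊕ Fin r) k := fromBlocks 0 (diagonal b) (diagonal b) 0
  set A := C' * B with hA_def
  have hWQ : IsUnit (W * Q).det := by rw [det_mul]; exact hW.mul hQ
  have hA : A = (W * Q) * F * (W * Q)⁻¹ := by
    rw [hAW, hdiag, Matrix.mul_inv_rev]
    simp only [Matrix.mul_assoc]
  have hAdet : IsUnit A.det := by
    rw [hAW, det_conj_of_mul_eq_one (mul_nonsing_inv _ hW) (nonsing_inv_mul _ hW),
      det_diagonal, isUnit_iff_ne_zero, Finset.prod_ne_zero_iff]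
    rintro (i | i) - <;> simp [hb i]
  have hVU : ((W * Q)⁻¹ * A⁻¹ * C') * (B * (W * Q)) = 1 := by
    have : ((W * Q)⁻¹ * A⁻¹ * C') * (B * (W * Q)) = (W * Q)⁻¹ * (A⁻¹ * A) * (W * Q) := by
      rw [hA_def]
      simp only [Matrix.mul_assoc]
    rw [this, nonsing_inv_mul _ hAdet, Matrix.mul_one, nonsing_inv_mul _ hWQ]
  have hBC : B * C' = (B * (W * Q)) * F * ((W * Q)⁻¹ * A⁻¹ * C') := by
    have : (B * (W * Q)) * F * ((W * Q)⁻¹ * A⁻¹ * C')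
        = B * ((W * Q) * F * (W * Q)⁻¹ * A⁻¹) * C' := by
      simp only [Matrix.mul_assoc]
    rw [this, ← hA, mul_nonsing_inv _ hAdet, Matrix.mul_one]
  rw [hBC]
  exact mul_add_mul_mem_image2_jordanOrbit h2r hb hVU

end Generic

section Factorization

open Polynomial

variable {k : Type*} [Field k]

theorem exists_eq_mul_of_rank_le {m n : Type*} [Fintype m] [DecidableEq m] [Fintype n]
    [DecidableEq n] (M : Matrix m m k) (hM : M.rank ≤ Fintype.card n)
    (hn : Fintype.card n ≤ Fintype.card m) :
    ∃ (B : Matrix m n k) (L C : Matrix n m k), M = B * C ∧ L * B = 1 := by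
  obtain ⟨V, U, e, hV, hU, hVMU⟩ := exists_rank_normal_form M
  rw [isUnit_iff_isUnit_det] at hV hU
  let T : Finset m := Finset.univ.map (Function.Embedding.inl.trans e.symm.toEmbedding)
  obtain ⟨T', hTT', hT'⟩ := Finset.exists_superset_card_eq (s := T) (n := Fintype.card n)
    (by simpa [T] using hM) hn
  let g : n ≃ T' := Fintype.equivOfCardEq (by simp [hT'])
  let J : Matrix m n k := (1 : Matrix m m k).submatrix id fun i => (g i : m)
  have hJJ : Jᵀ * J = 1 := by
    ext i j
    simp [J, Matrix.mul_apply, Matrix.one_apply, eq_comm]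
  have hproj : J * Jᵀ * (fromBlocks 1 0 0 0 : Matrix _ _ k).submatrix e e
      = (fromBlocks 1 0 0 0 : Matrix _ _ k).submatrix e e := by
    have hJ : J * Jᵀ = diagonal fun i => if i ∈ T' then 1 else 0 := by
      ext i j
      simp only [J, Matrix.mul_apply, Matrix.one_apply, submatrix_apply, transpose_apply, id_eq,
        diagonal_apply]
      rw [g.sum_comp fun x => (if i = (x : m) then (1 : k) else 0) * if j = (x : m) then 1 else 0,
        Finset.sum_coe_sort T' fun x => (if i = x then (1 : k) else 0) * if j = x then 1 else 0]
      by_cases hij : i = j <;> simp [hij]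
    rw [hJ]
    ext i j
    rw [diagonal_mul]
    split_ifs with hi
    · rw [one_mul]
    · rcases hei : e i with a | a
      · exact absurd (hTT' (Finset.mem_map.mpr ⟨a, Finset.mem_univ _, by simp [← hei]⟩)) hi
      · rcases hej : e j with c | c <;> simp [hei, hej]
  refine ⟨V⁻¹ * J, Jᵀ * V, Jᵀ * (V * M), ?_, ?_⟩
  · have hVM : V * M = (fromBlocks 1 0 0 0 : Matrix _ _ k).submatrix e e * U⁻¹ := by
      rw [← hVMU, mul_nonsing_inv_cancel_right _ _ hU]
    have : V⁻¹ * J * (Jᵀ * (V * M)) = V⁻¹ * (J * Jᵀ * (V * M)) := by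
      simp only [Matrix.mul_assoc]
    rw [this, hVM, ← Matrix.mul_assoc (J * Jᵀ), hproj, ← hVM, nonsing_inv_mul_cancel_left _ _ hV]
  · rw [Matrix.mul_assoc, mul_nonsing_inv_cancel_left _ _ hV, hJJ]

theorem exists_eq_prod_of_odd_coeff_eq_zero [IsAlgClosed k] {r : ℕ} {p : k[X]} (hp : p.Monic)
    (hdeg : p.natDegree = 2 * r) (hodd : ∀ j, ¬ 2 ∣ j → p.coeff j = 0) :
    ∃ a : Fin r → k, p = ∏ i, (X - C (Sum.elim a (-a) i)) := by
  have hexp : expand k 2 (contract 2 p) = p := by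
    ext j
    rw [coeff_expand two_pos]
    split_ifs with h
    · rw [coeff_contract two_ne_zero, Nat.div_mul_cancel h]
    · rw [hodd j h]
  have hq : (contract 2 p).Monic := by rwa [← monic_expand_iff two_pos, hexp]
  have hqdeg : (contract 2 p).natDegree = r := by
    have := natDegree_expand 2 (contract 2 p)
    rw [hexp, hdeg] at this
    omega
  have hsplits := IsAlgClosed.splits (contract 2 p)
  have hcard : (contract 2 p).roots.toList.length = r := by
    rw [Multiset.length_toList, ← hsplits.natDegree_eq_card_roots, hqdeg]
  obtain ⟨c, hc⟩ : ∃ c : Fin r → k, contract 2 p = ∏ i, (X - C (c i)) := by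
    refine ⟨fun i => (contract 2 p).roots.toList.get (i.cast hcard.symm), ?_⟩
    conv_lhs => rw [hsplits.eq_prod_roots_of_monic hq, ← Multiset.coe_toList (contract 2 p).roots,
      Multiset.map_coe, Multiset.prod_coe]
    subst hcard
    rw [← Fin.prod_univ_fun_getElem]
    rfl
  choose a ha using fun i => IsAlgClosed.exists_pow_nat_eq (c i) two_pos
  refine ⟨a, ?_⟩
  rw [← hexp, hc, map_prod, Fintype.prod_sum_type, ← Finset.prod_mul_distrib]
  refine Finset.prod_congr rfl fun i _ => ?_
  simp only [map_sub, expand_X, expand_C, ← ha, Sum.elim_inl, Sum.elim_inr, Pi.neg_apply, map_neg,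
    map_pow]
  ring

end Factorization

section Limit

open Polynomial

variable {k : Type*} [Field k]

theorem mem_zClosure_of_infinite {N : ℕ} {S : Set (Matrix (Fin N) (Fin N) k)}
    {M E : Matrix (Fin N) (Fin N) k} (h : {t : k | M + t • E ∈ S}.Infinite) : M ∈ zClosure S := by
  intro P hP
  let line : Fin N × Fin N → k[X] := fun q => C (M q.1 q.2) + X * C (E q.1 q.2)
  have heval : ∀ t, (MvPolynomial.eval₂ C line P).eval t
      = MvPolynomial.eval (fun q => (M + t • E) q.1 q.2) P := by
    intro t
    rw [← coe_evalRingHom, MvPolynomial.hom_eval₂, MvPolynomial.eval, MvPolynomial.coe_eval₂Hom]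
    congr 1
    · ext; simp
    · ext q
      simp only [line, coe_evalRingHom, eval_add, eval_mul, eval_X, eval_C,
        Matrix.add_apply, Matrix.smul_apply, smul_eq_mul]
  have hzero : MvPolynomial.eval₂ C line P = 0 :=
    eq_zero_of_infinite_isRoot _ (h.mono fun t ht => (heval t).trans (hP _ ht))
  have h0 := heval 0
  rw [hzero, eval_zero, zero_smul, add_zero] at h0
  exact h0.symm

theorem infinite_injective_add_mul [CharZero k] {r : ℕ} (a : Fin r → k) :
    {t : k | (∀ i, a i + t * (i + 1 : ℕ) ≠ 0) ∧ Function.Injective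
      (Sum.elim (fun i => a i + t * (i + 1 : ℕ)) (-fun i => a i + t * (i + 1 : ℕ)))}.Infinite := by
  have hfin : ∀ c d : k, d ≠ 0 → {t : k | c + t * d = 0}.Finite := by
    intro c d hd
    refine Set.Subsingleton.finite fun s hs t ht => mul_right_cancel₀ hd ?_
    exact add_left_cancel (hs.trans ht.symm)
  have hbad : ((⋃ (i : Fin r) (j : Fin r),
        {t : k | (a i + a j) + t * ((i + 1 : ℕ) + (j + 1 : ℕ)) = 0})
      ∪ ⋃ (i : Fin r) (j : Fin r) (_ : i ≠ j),
        {t : k | (a i - a j) + t * ((i + 1 : ℕ) - (j + 1 : ℕ)) = 0}).Finite := by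
    refine .union (Set.finite_iUnion fun i => Set.finite_iUnion fun j => hfin _ _ ?_)
      (Set.finite_iUnion fun i => Set.finite_iUnion fun j => Set.finite_iUnion fun hij =>
        hfin _ _ ?_)
    · exact_mod_cast (by omega : (i + 1 : ℕ) + (j + 1 : ℕ) ≠ 0)
    · rw [sub_ne_zero]
      exact_mod_cast fun h : (i + 1 : ℕ) = j + 1 => hij (Fin.ext (by omega))
  refine hbad.infinite_compl.mono fun t ht => ?_
  simp only [Set.mem_compl_iff, Set.mem_union, Set.mem_iUnion, Set.mem_ofPred_eq, not_or,
    not_exists] at ht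
  obtain ⟨hadd, hsub⟩ := ht
  refine ⟨fun i h => hadd i i (by linear_combination 2 * h), ?_⟩
  rintro (i | i) (j | j) h <;>
    simp only [Sum.elim_inl, Sum.elim_inr, Pi.neg_apply, Sum.inl.injEq, Sum.inr.injEq] at h ⊢
  · by_contra hij
    exact hsub i j hij (by linear_combination h)
  · exact (hadd i j (by linear_combination h)).elim
  · exact (hadd i j (by linear_combination -h)).elim
  · by_contra hij
    exact hsub i j hij (by linear_combination -h)

end Limit

theorem subset_zClosure_image2_add {k : Type*} [Field k] [IsAlgClosed k] [CharZero k]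
    {N r : ℕ} (h2r : 2 * r ≤ N) :
    {M : Matrix (Fin N) (Fin N) k | M.rank ≤ 2 * r ∧
          ∀ i : ℕ, 1 ≤ i → i ≤ r → (Matrix.charpoly M).coeff (N - (2 * i - 1)) = 0}
      ⊆ zClosure (Set.image2 (· + ·) (jordanOrbit k N (twoOneLam N r))
        (jordanOrbit k N (twoOneLam N r))) := by
  rintro M ⟨hrank, hcoeff⟩
  have hcard : Fintype.card (Fin r ⊕ Fin r) = 2 * r := by simp [two_mul]
  obtain ⟨B, L, C, hM, hLB⟩ := exists_eq_mul_of_rank_le (n := Fin r ⊕ Fin r) M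
    (by rwa [hcard]) (by rwa [hcard, Fintype.card_fin])
  have hdeg : (C * B).charpoly.natDegree = 2 * r := by rw [charpoly_natDegree_eq_dim, hcard]
  have hodd : ∀ j, ¬ 2 ∣ j → (C * B).charpoly.coeff j = 0 := by
    intro j hj
    rcases lt_or_ge (2 * r) j with hlt | hle
    · exact Polynomial.coeff_eq_zero_of_natDegree_lt (hdeg ▸ hlt)
    · have hi := hcoeff ((2 * r - j + 1) / 2) (by omega) (by omega)
      rw [hM, charpoly_mul_comm_of_le _ _ (by rwa [hcard, Fintype.card_fin]), hcard,
        Fintype.card_fin, show N - (2 * ((2 * r - j + 1) / 2) - 1) = j + (N - 2 * r) by omega,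
        Polynomial.coeff_X_pow_mul] at hi
      exact hi
  obtain ⟨a, ha⟩ := exists_eq_prod_of_odd_coeff_eq_zero (charpoly_monic _) hdeg hodd
  let s : Fin r → k := fun i => (i + 1 : ℕ)
  obtain ⟨E, hE⟩ := hasLinearSpectralPerturbation (C * B) _ (Sum.elim s (-s)) ha
  refine mem_zClosure_of_infinite (E := B * E * L)
    ((infinite_injective_add_mul a).mono fun t ht => ?_)
  have hline : M + t • (B * E * L) = B * (C + t • (E * L)) := by
    rw [hM, Matrix.mul_add, Matrix.mul_smul, Matrix.mul_assoc]
  have hcomp : (C + t • (E * L)) * B = C * B + t • E := by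
    rw [Matrix.add_mul, Matrix.smul_mul, Matrix.mul_assoc, hLB, Matrix.mul_one]
  rw [Set.mem_ofPred_eq, hline]
  refine mul_mem_image2_jordanOrbit h2r ht.1 ht.2 ?_
  rw [hcomp, hE]
  refine Finset.prod_congr rfl ?_
  rintro (i | i) - <;> simp [s]
  ring

/-- For `λ = (2^r, 1^{N−2r})`, the conical secant variety of `O_λ` is the set of matrices
of rank at most `2r` whose characteristic polynomial coefficients in degrees
`N−1, N−3, …, N−2r+1` all vanish. -/
theorem stmt2 {k : Type*} [Field k] [IsAlgClosed k] [CharZero k]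
    {N r : ℕ} (hr : 1 ≤ r) (h2r : 2 * r ≤ N) :
    zClosure (Set.image2 (· + ·) (jordanOrbit k N (twoOneLam N r))
        (jordanOrbit k N (twoOneLam N r)))
      = {M : Matrix (Fin N) (Fin N) k | M.rank ≤ 2 * r ∧
          ∀ i : ℕ, 1 ≤ i → i ≤ r → (Matrix.charpoly M).coeff (N - (2 * i - 1)) = 0} :=
  (zClosure_image2_add_subset h2r).antisymm (subset_zClosure_image2_add h2r)
end
end

section
/- Let k be an algebraically closed field of characteristic 0 and let λ be a symplectic partition of 2n whose number of parts p satisfies p ≤ n (equivalently, rank(e) = 2n − p ≥ n for e ∈ O_λ). Then the Zariski closure in Mat_{2n}(k) of the set {x + y : x, y ∈ O_λ ∩ sp_{2n}(k)} equals sp_{2n}(k); that is, the conical secant variety of this nilpotent Sp_{2n}-orbit is all of sp_{2n}. -/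
open Matrix

noncomputable section

/-- The standard symplectic form matrix `J = [[0, I_n], [−I_n, 0]]`. -/
def Jmat (k : Type*) [CommRing k] (n : ℕ) : Matrix (Fin (2 * n)) (Fin (2 * n)) k :=
  Matrix.of fun i j =>
    if (i : ℕ) + n = (j : ℕ) then 1 else if (j : ℕ) + n = (i : ℕ) then -1 else 0

/-- The symplectic Lie algebra `sp_{2n}(k) = {M : Mᵀ J + J M = 0}`. -/
def spSet (k : Type*) [CommRing k] (n : ℕ) : Set (Matrix (Fin (2 * n)) (Fin (2 * n)) k) :=
  {M | Mᵀ * Jmat k n + Jmat k n * M = 0}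

/-- A partition is symplectic if each odd part occurs with even multiplicity. -/
def IsSymplecticParts {p : ℕ} (lam : Fin p → ℕ) : Prop :=
  ∀ m : ℕ, Odd m → Even ((Finset.univ.filter (fun l => lam l = m)).card)

/-- `w` and `u` form a Darboux family. -/
structure IsDarboux {k V : Type*} [Field k] [AddCommGroup V] [Module k V] {n : ℕ}
    (ω : V →ₗ[k] V →ₗ[k] k) (w u : Fin n → V) : Prop where
  left : ∀ i j, ω (w i) (w j) = 0
  right : ∀ i j, ω (u i) (u j) = 0
  pair : ∀ i j, ω (w i) (u j) = if i = j then 1 else 0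

section Symplectic

variable {k V : Type*} [Field k] [AddCommGroup V] [Module k V]

theorem neg_of_alt {ω : V →ₗ[k] V →ₗ[k] k} (halt : ∀ v, ω v v = 0) (x y : V) :
    ω x y = - ω y x := by
  have h := halt (x + y)
  simp only [map_add, LinearMap.add_apply, halt] at h
  linear_combination h

/-- The orthogonal complement of the plane spanned by `w` and `u`. -/
def planePerp (ω : V →ₗ[k] V →ₗ[k] k) (w u : V) : Submodule k V :=
  LinearMap.ker ((ω w).prod (ω u))

theorem mem_planePerp {ω : V →ₗ[k] V →ₗ[k] k} {w u v : V} :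
    v ∈ planePerp ω w u ↔ ω w v = 0 ∧ ω u v = 0 := by
  simp [planePerp]

theorem planePerp_decomp {ω : V →ₗ[k] V →ₗ[k] k} (halt : ∀ v, ω v v = 0) {w u : V}
    (h : ω w u = 1) (v : V) : v + ω u v • w - ω w v • u ∈ planePerp ω w u := by
  rw [mem_planePerp]
  have h' : ω u w = -1 := by rw [neg_of_alt halt, h]
  simp [halt, h, h']

theorem finrank_planePerp [FiniteDimensional k V] {ω : V →ₗ[k] V →ₗ[k] k}
    (halt : ∀ v, ω v v = 0) {w u : V} (h : ω w u = 1) :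
    Module.finrank k (planePerp ω w u) + 2 = Module.finrank k V := by
  have h' : ω u w = -1 := by rw [neg_of_alt halt, h]
  have hs : LinearMap.range ((ω w).prod (ω u)) = ⊤ := by
    rw [LinearMap.range_eq_top]
    rintro ⟨a, b⟩
    exact ⟨a • u - b • w, by simp [halt, h, h']⟩
  have := LinearMap.finrank_range_add_finrank_ker ((ω w).prod (ω u))
  rw [hs, finrank_top, Module.finrank_prod, Module.finrank_self] at this
  rw [planePerp]
  omega

/-- The restriction of a bilinear form to a submodule. -/
def restrictForm (ω : V →ₗ[k] V →ₗ[k] k) (W : Submodule k V) : W →ₗ[k] W →ₗ[k] k :=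
  ω.compl₁₂ W.subtype W.subtype

@[simp] theorem restrictForm_apply (ω : V →ₗ[k] V →ₗ[k] k) (W : Submodule k V) (x y : W) :
    restrictForm ω W x y = ω x y := rfl

theorem planePerp_nondegenerate {ω : V →ₗ[k] V →ₗ[k] k} (halt : ∀ v, ω v v = 0)
    (hnd : ∀ v, (∀ y, ω v y = 0) → v = 0) {w u : V} (h : ω w u = 1)
    (v : planePerp ω w u) (hv : ∀ y, restrictForm ω (planePerp ω w u) v y = 0) : v = 0 := by
  obtain ⟨v, hv'⟩ := v
  rw [Submodule.mk_eq_zero]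
  refine hnd v fun y => ?_
  have h1 := hv ⟨_, planePerp_decomp halt h y⟩
  rw [mem_planePerp, neg_of_alt halt w, neg_of_alt halt u] at hv'
  simpa [neg_eq_zero.1 hv'.1, neg_eq_zero.1 hv'.2] using h1

theorem IsDarboux.cons {n : ℕ} {ω : V →ₗ[k] V →ₗ[k] k} (halt : ∀ v, ω v v = 0) {w u : V}
    (h : ω w u = 1) {w' u' : Fin n → planePerp ω w u}
    (hd : IsDarboux (restrictForm ω (planePerp ω w u)) w' u') :
    IsDarboux ω (Fin.cons w fun i => (w' i : V)) (Fin.cons u fun i => (u' i : V)) := by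
  have h1 : ∀ x : planePerp ω w u, ω w x = 0 := fun x => (mem_planePerp.1 x.2).1
  have h2 : ∀ x : planePerp ω w u, ω u x = 0 := fun x => (mem_planePerp.1 x.2).2
  have h1' : ∀ x : planePerp ω w u, ω x w = 0 := fun x => by
    rw [neg_of_alt halt, h1, neg_zero]
  have h2' : ∀ x : planePerp ω w u, ω x u = 0 := fun x => by
    rw [neg_of_alt halt, h2, neg_zero]
  refine ⟨fun i j => ?_, fun i j => ?_, fun i j => ?_⟩
  · have := hd.left
    refine Fin.cases ?_ (fun i => ?_) i <;> refine Fin.cases ?_ (fun j => ?_) j <;>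
      simp_all
  · have := hd.right
    refine Fin.cases ?_ (fun i => ?_) i <;> refine Fin.cases ?_ (fun j => ?_) j <;>
      simp_all
  · have := hd.pair
    refine Fin.cases ?_ (fun i => ?_) i <;> refine Fin.cases ?_ (fun j => ?_) j <;>
      simp_all [Fin.succ_ne_zero, (Fin.succ_ne_zero _).symm]

theorem exists_eq_form [FiniteDimensional k V] {ω : V →ₗ[k] V →ₗ[k] k}
    (hnd : ∀ v, (∀ y, ω v y = 0) → v = 0) (f : V →ₗ[k] k) : ∃ u, ω u = f := by
  have hinj : Function.Injective ω := by
    rw [← LinearMap.ker_eq_bot, LinearMap.ker_eq_bot']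
    exact fun v hv => hnd v fun y => by rw [hv]; rfl
  exact (LinearMap.injective_iff_surjective_of_finrank_eq_finrank
    (Subspace.dual_finrank_eq (K := k) (V := V)).symm).1 hinj f

/-- A nonzero symmetric form has a nonisotropic vector. -/
theorem exists_nonisotropic [CharZero k] {Q : V →ₗ[k] V →ₗ[k] k} (hQ : ∀ x y, Q x y = Q y x)
    (h0 : Q ≠ 0) : ∃ x, Q x x ≠ 0 := by
  by_contra! h
  refine h0 (LinearMap.ext fun x => LinearMap.ext fun y => ?_)
  have h1 := h (x + y)
  simp only [map_add, LinearMap.add_apply, h, hQ y x] at h1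
  have h2 : (2 : k) * Q x y = 0 := by linear_combination h1
  simpa using h2

/-- A nonisotropic vector can be chosen outside the kernel of a nonzero linear form. -/
theorem exists_nonisotropic_of_ne_zero [CharZero k] {Q : V →ₗ[k] V →ₗ[k] k}
    (hQ : ∀ x y, Q x y = Q y x) (h0 : Q ≠ 0) {f : V →ₗ[k] k} (hf : f ≠ 0) :
    ∃ x, Q x x ≠ 0 ∧ f x ≠ 0 := by
  obtain ⟨x, hx⟩ := exists_nonisotropic hQ h0
  obtain ⟨y, hy⟩ : ∃ y, f y ≠ 0 := by
    by_contra! h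
    exact hf (LinearMap.ext h)
  by_cases hfx : f x = 0
  swap
  · exact ⟨x, hx, hfx⟩
  by_cases hyy : Q y y = 0
  swap
  · exact ⟨y, hyy, hy⟩
  by_cases hp : Q (x + y) (x + y) = 0
  swap
  · exact ⟨x + y, hp, by simpa [hfx]⟩
  refine ⟨x - y, fun hm => hx ?_, by simpa [hfx]⟩
  simp only [map_add, map_sub, LinearMap.add_apply, LinearMap.sub_apply, hyy, hQ y x] at hp hm
  have : (2 : k) * Q x x = 0 := by linear_combination hp + hm
  simpa using this

theorem exists_normalized_vector [CharZero k] [IsAlgClosed k] {ω Q : V →ₗ[k] V →ₗ[k] k}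
    (hnd : ∀ v, (∀ y, ω v y = 0) → v = 0) (hsymm : ∀ x y, ω x y = - ω y x)
    (hQ : ∀ x y, Q x y = Q y x) (h0 : Q ≠ 0) :
    ∃ w, Q w w = 1 ∧ (LinearMap.ker Q = ⊥ ∨ ∃ z ∈ LinearMap.ker Q, ω w z ≠ 0) := by
  have key : ∃ x, Q x x ≠ 0 ∧ (LinearMap.ker Q = ⊥ ∨ ∃ z ∈ LinearMap.ker Q, ω x z ≠ 0) := by
    by_cases hk : LinearMap.ker Q = ⊥
    · obtain ⟨x, hx⟩ := exists_nonisotropic hQ h0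
      exact ⟨x, hx, Or.inl hk⟩
    · obtain ⟨z, hz, hz0⟩ := Submodule.exists_mem_ne_zero_of_ne_bot hk
      have : ω z ≠ 0 := fun h => hz0 (hnd z fun y => by rw [h]; rfl)
      obtain ⟨x, hx, hx'⟩ := exists_nonisotropic_of_ne_zero hQ h0 this
      exact ⟨x, hx, Or.inr ⟨z, hz, by rw [hsymm]; simpa using hx'⟩⟩
  obtain ⟨x, hx, h⟩ := key
  obtain ⟨r, hr⟩ := IsAlgClosed.exists_pow_nat_eq (Q x x) (n := 2) (by norm_num)
  have hr0 : r ≠ 0 := by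
    rintro rfl
    exact hx (by simpa using hr.symm)
  refine ⟨r⁻¹ • x, ?_, h.imp_right ?_⟩
  · simp only [map_smul, LinearMap.smul_apply, smul_eq_mul, ← hr]
    field_simp
  · rintro ⟨z, hz, hz'⟩
    exact ⟨z, hz, by simp [hr0, hz']⟩

theorem finrank_ker_restrictForm_lt [FiniteDimensional k V] {ω Q : V →ₗ[k] V →ₗ[k] k}
    (hQ : ∀ x y, Q x y = Q y x) {w u z : V} (hw : Q w w = 1) (hu : ω u = -Q w)
    (hz : Q z = 0) (hwz : ω w z ≠ 0) :
    Module.finrank k (LinearMap.ker (restrictForm Q (planePerp ω w u))) <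
      Module.finrank k (LinearMap.ker Q) := by
  have hQz : ∀ y, Q y z = 0 := fun y => by rw [hQ, hz]; rfl
  rw [LinearEquiv.finrank_eq (Submodule.equivMapOfInjective (planePerp ω w u).subtype
    (Submodule.injective_subtype _) (LinearMap.ker (restrictForm Q (planePerp ω w u))))]
  refine Submodule.finrank_lt_finrank_of_lt (lt_of_le_of_ne ?_ ?_)
  · rintro _ ⟨v, hv, rfl⟩
    obtain ⟨hv1, hv2⟩ := mem_planePerp.1 v.2
    rw [hu] at hv2
    simp only [LinearMap.neg_apply, neg_eq_zero] at hv2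
    refine LinearMap.ext fun y => ?_
    have hmem : y - Q w y • w - (ω w (y - Q w y • w) / ω w z) • z ∈ planePerp ω w u := by
      rw [mem_planePerp, hu]
      constructor
      · simp only [map_sub (ω w), map_smul (ω w), smul_eq_mul]
        field_simp
        ring
      · simp [hw, hQz]
    have := LinearMap.congr_fun hv ⟨_, hmem⟩
    simpa [hQz, hQ _ w, hv2] using this
  · intro h
    have hz' : z ∈ LinearMap.ker Q := hz
    rw [← h] at hz'
    obtain ⟨v, -, rfl⟩ := hz'
    exact hwz (mem_planePerp.1 v.2).1

theorem finrank_ker_restrictForm_le_one [FiniteDimensional k V] {ω Q : V →ₗ[k] V →ₗ[k] k}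
    (halt : ∀ v, ω v v = 0)
    (hQ : ∀ x y, Q x y = Q y x) {w u : V} (hwu : ω w u = 1) (hu : ω u = -Q w)
    (hker : LinearMap.ker Q = ⊥) :
    Module.finrank k (LinearMap.ker (restrictForm Q (planePerp ω w u))) ≤ 1 := by
  let f : LinearMap.ker (restrictForm Q (planePerp ω w u)) →ₗ[k] k :=
    (Q u) ∘ₗ (planePerp ω w u).subtype ∘ₗ Submodule.subtype _
  have hf : Function.Injective f := by
    rw [← LinearMap.ker_eq_bot, LinearMap.ker_eq_bot']
    rintro ⟨v, hv⟩ hfv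
    have hfv : Q u v = 0 := hfv
    obtain ⟨hv1, hv2⟩ := mem_planePerp.1 v.2
    rw [hu] at hv2
    simp only [LinearMap.neg_apply, neg_eq_zero] at hv2
    rw [Submodule.mk_eq_zero, ← Submodule.coe_eq_zero, ← Submodule.mem_bot k, ← hker]
    refine LinearMap.ext fun y => ?_
    have := LinearMap.congr_fun hv ⟨_, planePerp_decomp halt hwu y⟩
    simpa [hQ _ w, hQ _ u, hv2, hfv] using this
  simpa using LinearMap.finrank_le_finrank_of_injective hf

end Symplectic

/-- If the kernel of the symmetric form `Q` has at most half the dimension, there is a Darboux basis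
whose first half is orthonormal for `Q`. -/
theorem exists_darboux_orthonormal {k : Type*} [Field k] [CharZero k] [IsAlgClosed k] (n : ℕ)
    {V : Type*} [AddCommGroup V] [Module k V] [FiniteDimensional k V]
    (ω Q : V →ₗ[k] V →ₗ[k] k) (halt : ∀ v, ω v v = 0)
    (hnd : ∀ v, (∀ y, ω v y = 0) → v = 0) (hQ : ∀ x y, Q x y = Q y x)
    (hdim : Module.finrank k V = 2 * n) (hker : Module.finrank k (LinearMap.ker Q) ≤ n) :
    ∃ w u : Fin n → V, IsDarboux ω w u ∧ ∀ i j, Q (w i) (w j) = if i = j then 1 else 0 := by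
  induction n generalizing V with
  | zero => exact ⟨Fin.elim0, Fin.elim0, ⟨fun i => i.elim0, fun i => i.elim0, fun i => i.elim0⟩,
      fun i => i.elim0⟩
  | succ n ih =>
    have h0 : Q ≠ 0 := by
      rintro rfl
      rw [LinearMap.ker_zero, finrank_top] at hker
      omega
    obtain ⟨w, hw, hcase⟩ := exists_normalized_vector hnd (neg_of_alt halt) hQ h0
    obtain ⟨u, hu⟩ := exists_eq_form hnd (-Q w)
    have hwu : ω w u = 1 := by rw [neg_of_alt halt, hu]; simp [hw]
    have hfr := finrank_planePerp halt hwu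
    have hker' : Module.finrank k (LinearMap.ker (restrictForm Q (planePerp ω w u))) ≤ n := by
      rcases hcase with hbot | ⟨z, hz, hwz⟩
      · rcases Nat.eq_zero_or_pos n with rfl | hn
        · have := Submodule.finrank_le (LinearMap.ker (restrictForm Q (planePerp ω w u)))
          omega
        · exact (finrank_ker_restrictForm_le_one halt hQ hwu hu hbot).trans hn
      · have := finrank_ker_restrictForm_lt hQ hw hu hz hwz
        omega
    obtain ⟨w', u', hd, hq⟩ := ih (restrictForm ω (planePerp ω w u))
      (restrictForm Q (planePerp ω w u)) (fun v => halt v) (planePerp_nondegenerate halt hnd hwu)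
      (fun x y => hQ x y) (by omega) hker'
    refine ⟨_, _, hd.cons halt hwu, fun i j => ?_⟩
    have hQw : ∀ x : planePerp ω w u, Q w x = 0 := fun x => by
      have := (mem_planePerp.1 x.2).2
      rw [hu] at this
      simpa using this
    have hQw' : ∀ x : planePerp ω w u, Q x w = 0 := fun x => by rw [hQ, hQw]
    refine Fin.cases ?_ (fun i => ?_) i <;> refine Fin.cases ?_ (fun j => ?_) j
    · simpa using hw
    · simpa [(Fin.succ_ne_zero _).symm] using hQw (w' j)
    · simpa [Fin.succ_ne_zero] using hQw' (w' i)
    · simpa using hq i j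

/-- An invertible semisimple element of the symplectic Lie algebra is antidiagonal in a suitable
Darboux basis. -/
theorem exists_darboux_of_isSemisimple {k : Type*} [Field k] [CharZero k] [IsAlgClosed k] (n : ℕ)
    {V : Type*} [AddCommGroup V] [Module k V] [FiniteDimensional k V]
    (ω : V →ₗ[k] V →ₗ[k] k) (halt : ∀ v, ω v v = 0)
    (hnd : ∀ v, (∀ y, ω v y = 0) → v = 0) (X : Module.End k V)
    (hX : ∀ x y, ω (X x) y = - ω x (X y)) (hss : X.IsSemisimple)
    (hinj : ∀ x, X x = 0 → x = 0) (hdim : Module.finrank k V = 2 * n) :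
    ∃ (w u : Fin n → V) (t : Fin n → k), IsDarboux ω w u ∧ (∀ i, t i ≠ 0) ∧
      (∀ i, X (w i) = u i) ∧ ∀ i, X (u i) = t i • w i := by
  induction n generalizing V with
  | zero => exact ⟨Fin.elim0, Fin.elim0, Fin.elim0,
      ⟨fun i => i.elim0, fun i => i.elim0, fun i => i.elim0⟩,
      fun i => i.elim0, fun i => i.elim0, fun i => i.elim0⟩
  | succ n ih =>
    have htop := hss.iSup_eigenspace_eq_top
    have : Nontrivial V := Module.nontrivial_of_finrank_pos (R := k) (by omega)
    obtain ⟨a, ha⟩ := Module.End.exists_eigenvalue X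
    obtain ⟨v, hv⟩ := ha.exists_hasEigenvector
    have hXv := hv.apply_eq_smul
    have ha0 : a ≠ 0 := by
      rintro rfl
      exact hv.2 (hinj v (by simpa using hXv))
    obtain ⟨v', hv', hvv'⟩ : ∃ v', X v' = (-a) • v' ∧ ω v v' ≠ 0 := by
      by_contra! h
      refine hv.2 (hnd v fun y => ?_)
      have hle : (⨆ μ, X.eigenspace μ) ≤ LinearMap.ker (ω v) := by
        refine iSup_le fun μ y hy => ?_
        rw [Module.End.mem_eigenspace_iff] at hy
        rw [LinearMap.mem_ker]
        by_cases hμ : μ = -a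
        · exact h y (hμ ▸ hy)
        · have h1 := hX v y
          rw [hXv, hy] at h1
          simp only [map_smul, LinearMap.smul_apply, smul_eq_mul] at h1
          have h2 : (μ + a) * ω v y = 0 := by linear_combination h1
          exact (mul_eq_zero.1 h2).resolve_left fun h3 => hμ (eq_neg_of_add_eq_zero_left h3)
      rw [htop] at hle
      exact hle Submodule.mem_top
    have hden : -2 * a * ω v v' ≠ 0 := mul_ne_zero (mul_ne_zero (by norm_num) ha0) hvv'
    obtain ⟨w, hw⟩ : ∃ w, w = v + (-2 * a * ω v v')⁻¹ • v' := ⟨_, rfl⟩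
    obtain ⟨u, hu⟩ : ∃ u, u = X w := ⟨_, rfl⟩
    have hXu : X u = (a * a) • w := by
      rw [hu, hw]
      simp only [map_add, map_smul, hXv, hv', smul_add, smul_smul]
      congr 2
      ring
    have hwu : ω w u = 1 := by
      rw [hu, hw]
      simp only [map_add, map_smul, hXv, hv', LinearMap.add_apply, LinearMap.smul_apply, halt,
        smul_eq_mul, neg_of_alt halt v' v]
      field_simp
      ring
    have hfr := finrank_planePerp halt hwu
    have hmaps : ∀ x ∈ planePerp ω w u, X x ∈ planePerp ω w u := by
      intro x hx
      rw [mem_planePerp] at hx ⊢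
      have h1 := hX w x
      have h2 := hX u x
      rw [← hu, hx.2] at h1
      rw [hXu, map_smul, LinearMap.smul_apply, hx.1, smul_zero] at h2
      exact ⟨neg_eq_zero.1 h1.symm, neg_eq_zero.1 h2.symm⟩
    obtain ⟨w', u', t', hd, ht, hw', hu'⟩ := ih (restrictForm ω (planePerp ω w u))
      (fun v => halt v) (planePerp_nondegenerate halt hnd hwu) (X.restrict hmaps)
      (fun x y => hX x y) (Module.End.IsSemisimple.restrict hmaps hss) (fun x hx => by
        have := hinj x (congrArg Subtype.val hx)
        exact Subtype.ext this) (by omega)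
    refine ⟨_, _, Fin.cons (a * a) t', hd.cons halt hwu, ?_, ?_, ?_⟩
    · exact Fin.cases (by simpa using ha0) (by simpa using ht)
    · exact Fin.cases (by simpa using hu.symm) fun i => congrArg Subtype.val (hw' i)
    · exact Fin.cases (by simpa using hXu) fun i => congrArg Subtype.val (hu' i)

/-- The standard symplectic matrix indexed by a sum type. -/
def blockJ (k : Type*) [CommRing k] (n : ℕ) : Matrix (Fin n ⊕ Fin n) (Fin n ⊕ Fin n) k :=
  fromBlocks 0 1 (-1) 0

theorem blockJ_mul_self (k : Type*) [CommRing k] (n : ℕ) : blockJ k n * blockJ k n = -1 := by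
  simp [blockJ, fromBlocks_multiply, ← fromBlocks_one, fromBlocks_neg]

theorem blockJ_transpose (k : Type*) [CommRing k] (n : ℕ) : (blockJ k n)ᵀ = -blockJ k n := by
  simp [blockJ, fromBlocks_transpose, fromBlocks_neg]

section Frames

variable {k I : Type*} [Field k] [Fintype I] [DecidableEq I] {n : ℕ}

/-- The bilinear form with Gram matrix `B`. -/
def matForm (B : Matrix I I k) : (I → k) →ₗ[k] (I → k) →ₗ[k] k :=
  Matrix.toLinearMap₂' k B

theorem matForm_apply (B : Matrix I I k) (v w : I → k) : matForm B v w = v ⬝ᵥ B *ᵥ w :=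
  Matrix.toLinearMap₂'_apply' B v w

/-- The matrix whose columns are the vectors `w` followed by the vectors `u`. -/
def frame (w u : Fin n → I → k) : Matrix I (Fin n ⊕ Fin n) k :=
  Matrix.of fun i s => Sum.elim w u s i

theorem frame_gram (w u : Fin n → I → k) (B : Matrix I I k) (s t : Fin n ⊕ Fin n) :
    ((frame w u)ᵀ * B * frame w u) s t =
      matForm B (Sum.elim w u s) (Sum.elim w u t) := by
  rw [matForm_apply, Matrix.mul_assoc]
  rfl

theorem matForm_alt [CharZero k] {B : Matrix I I k} (hB : Bᵀ = -B) (v : I → k) :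
    matForm B v v = 0 := by
  rw [matForm_apply]
  have h : v ⬝ᵥ B *ᵥ v = - (v ⬝ᵥ B *ᵥ v) := by
    conv_lhs => rw [dotProduct_mulVec, dotProduct_comm, ← mulVec_transpose, hB, neg_mulVec,
      dotProduct_neg]
  exact self_eq_neg.1 h

theorem matForm_symm {B : Matrix I I k} (hB : Bᵀ = B) (v w : I → k) :
    matForm B v w = matForm B w v := by
  rw [matForm_apply, matForm_apply]
  conv_lhs => rw [dotProduct_mulVec, dotProduct_comm, ← mulVec_transpose, hB]

theorem matForm_nondegenerate {B : Matrix I I k} (hB : Bᵀ = -B)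
    (hnd : ∀ v, B *ᵥ v = 0 → v = 0) (v : I → k)
    (hv : ∀ y, matForm B v y = 0) : v = 0 := by
  apply hnd
  have h : Bᵀ *ᵥ v = 0 := by
    rw [mulVec_transpose, ← dotProduct_eq_zero_iff]
    intro y
    rw [← dotProduct_mulVec, ← matForm_apply, hv]
  rw [hB, neg_mulVec, neg_eq_zero] at h
  exact h

theorem IsDarboux.frame_gram [CharZero k] {w u : Fin n → I → k} {B : Matrix I I k} (hB : Bᵀ = -B)
    (h : IsDarboux (matForm B) w u) :
    (frame w u)ᵀ * B * frame w u = blockJ k n := by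
  ext s t
  rw [_root_.frame_gram]
  rcases s with s | s <;> rcases t with t | t
  · simpa [blockJ] using h.left s t
  · simpa [blockJ, Matrix.one_apply] using h.pair s t
  · rw [neg_of_alt (matForm_alt hB)]
    simpa [blockJ, Matrix.one_apply, eq_comm] using h.pair t s
  · simpa [blockJ] using h.right s t

end Frames

theorem frame_inverse {k I : Type*} [Field k] [Fintype I] {n : ℕ} {B : Matrix I I k}
    {G : Matrix I (Fin n ⊕ Fin n) k} (h : Gᵀ * B * G = blockJ k n) :
    -(blockJ k n * (Gᵀ * B)) * G = 1 := by
  rw [Matrix.neg_mul, Matrix.mul_assoc, h, blockJ_mul_self, neg_neg]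

theorem matrix_conj_pow {R I m : Type*} [CommRing R] [Fintype I] [DecidableEq I] [Fintype m]
    [DecidableEq m] {G : Matrix I m R} {L : Matrix m I R} (hLG : L * G = 1) (hGL : G * L = 1)
    (E : Matrix I I R) (i : ℕ) : (L * E * G) ^ i = L * E ^ i * G := by
  induction i with
  | zero => simp [hLG]
  | succ i ih =>
    rw [pow_succ, ih, pow_succ]
    calc L * E ^ i * G * (L * E * G) = L * E ^ i * (G * L) * E * G := by
          simp only [Matrix.mul_assoc]
      _ = L * (E ^ i * E) * G := by rw [hGL]; simp only [Matrix.mul_assoc, Matrix.mul_one]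

theorem rank_conj_pow {k I m : Type*} [Field k] [Fintype I] [DecidableEq I] [Fintype m]
    [DecidableEq m] {G : Matrix I m k} {L : Matrix m I k} (hLG : L * G = 1) (hGL : G * L = 1)
    (E : Matrix I I k) (i : ℕ) : ((L * E * G) ^ i).rank = (E ^ i).rank := by
  rw [matrix_conj_pow hLG hGL]
  apply le_antisymm
  · exact (rank_mul_le_left _ _).trans (rank_mul_le_right _ _)
  · have h : E ^ i = G * (L * E ^ i * G) * L := by
      calc E ^ i = (G * L) * E ^ i * (G * L) := by rw [hGL, Matrix.one_mul, Matrix.mul_one]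
        _ = _ := by simp only [Matrix.mul_assoc]
    conv_lhs => rw [h]
    exact (rank_mul_le_left _ _).trans (rank_mul_le_right _ _)

theorem exists_standard_form {k I : Type*} [Field k] [CharZero k] [IsAlgClosed k] [Fintype I]
    [DecidableEq I] {n : ℕ} (hcard : Fintype.card I = 2 * n) {B E : Matrix I I k}
    (hB : Bᵀ = -B) (hnd : ∀ v, B *ᵥ v = 0 → v = 0) (hBE : (B * E)ᵀ = B * E)
    (hrank : n ≤ E.rank) :
    ∃ M : Matrix (Fin n ⊕ Fin n) (Fin n ⊕ Fin n) k, (∀ i, (M ^ i).rank = (E ^ i).rank) ∧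
      (blockJ k n * M)ᵀ = blockJ k n * M ∧ M.toBlocks₂₁ = 1 := by
  have hker : Module.finrank k (LinearMap.ker (matForm (B * E))) ≤ n := by
    have hle : LinearMap.ker (matForm (B * E)) ≤ LinearMap.ker E.mulVecLin := by
      intro v hv
      rw [LinearMap.mem_ker, mulVecLin_apply]
      apply hnd
      rw [mulVec_mulVec, ← dotProduct_eq_zero_iff]
      intro y
      rw [dotProduct_comm, ← matForm_apply, matForm_symm hBE]
      exact LinearMap.congr_fun hv y
    have h1 := Submodule.finrank_mono hle
    have h2 := LinearMap.finrank_range_add_finrank_ker E.mulVecLin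
    rw [Module.finrank_fintype_fun_eq_card, hcard] at h2
    rw [Matrix.rank] at hrank
    omega
  obtain ⟨w, u, hd, hq⟩ := exists_darboux_orthonormal n (matForm B)
    (matForm (B * E)) (matForm_alt hB) (matForm_nondegenerate hB hnd)
    (matForm_symm hBE) (by rw [Module.finrank_fintype_fun_eq_card, hcard]) hker
  have hgram := hd.frame_gram hB
  have hLG := frame_inverse hgram
  have hGL := (Matrix.mul_eq_one_comm_of_card_eq _ _ _ (by simp [hcard, two_mul])).1 hLG
  have hJM : blockJ k n * (-(blockJ k n * ((frame w u)ᵀ * B)) * E * frame w u) =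
      (frame w u)ᵀ * (B * E) * frame w u := by
    simp only [Matrix.neg_mul, Matrix.mul_neg, ← Matrix.mul_assoc, blockJ_mul_self,
      Matrix.one_mul, neg_neg]
  refine ⟨_, rank_conj_pow hLG hGL E, ?_, ?_⟩
  · rw [hJM]
    simp only [Matrix.transpose_mul, Matrix.transpose_transpose, Matrix.mul_assoc] at hBE ⊢
    rw [← Matrix.mul_assoc Eᵀ, hBE, Matrix.mul_assoc]
  · ext i j
    have h := congrFun (congrFun hJM (Sum.inl i)) (Sum.inl j)
    rw [frame_gram] at h
    simp only [Sum.elim_inl, hq] at h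
    rw [Matrix.one_apply, ← h]
    generalize -(blockJ k n * ((frame w u)ᵀ * B)) * E * frame w u = M
    conv_rhs => rw [← fromBlocks_toBlocks M, blockJ, fromBlocks_multiply]
    simp

section JordanModel

/-- An even finite type carries a fixed-point-free involution. -/
theorem exists_involutive_of_even_card {α : Type*} [Fintype α] (h : Even (Fintype.card α)) :
    ∃ τ : α → α, Function.Involutive τ ∧ ∀ a, τ a ≠ a := by
  obtain ⟨c, hc⟩ := h
  have e : α ≃ Fin c ⊕ Fin c := Fintype.equivOfCardEq (by simp [hc])
  refine ⟨fun a => e.symm (e a).swap, fun a => by simp, fun a ha => ?_⟩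
  have h1 := (Equiv.symm_apply_eq e).1 ha
  revert h1
  rcases e a with x | x <;> simp

theorem exists_part_involution {p : ℕ} {lam : Fin p → ℕ}
    (hsymp : ∀ m : ℕ, Odd m → Even ((Finset.univ.filter (fun l => lam l = m)).card)) :
    ∃ σ : Fin p → Fin p, Function.Involutive σ ∧ (∀ l, lam (σ l) = lam l) ∧
      ∀ l, Odd (lam l) → σ l ≠ l := by
  have h : ∀ m : ℕ, ∃ τ : {l // lam l = m} → {l // lam l = m},
      Function.Involutive τ ∧ (Odd m → ∀ a, τ a ≠ a) := by
    intro m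
    by_cases hm : Odd m
    · obtain ⟨τ, h1, h2⟩ := exists_involutive_of_even_card (α := {l // lam l = m})
        (by rw [Fintype.card_subtype]; exact hsymp m hm)
      exact ⟨τ, h1, fun _ => h2⟩
    · exact ⟨id, fun _ => rfl, fun h => absurd h hm⟩
  choose τ hτ hτ' using h
  have hcomp : ∀ m (a : {l // lam l = m}), τ (lam a) ⟨a, rfl⟩ = (⟨τ m a, (τ m a).2.trans a.2.symm⟩ :
      {l // lam l = lam a}) := by
    rintro m ⟨a, rfl⟩
    rfl
  refine ⟨fun l => τ (lam l) ⟨l, rfl⟩, fun l => ?_, fun l => (τ (lam l) ⟨l, rfl⟩).2, ?_⟩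
  · have := congrArg Subtype.val (hcomp (lam l) (τ (lam l) ⟨l, rfl⟩))
    simp only [] at this ⊢
    rw [this, hτ]
  · intro l hl h
    exact hτ' _ hl ⟨l, rfl⟩ (Subtype.ext h)

theorem exists_part_sign (k : Type*) [Field k] {p : ℕ} {lam : Fin p → ℕ} {σ : Fin p → Fin p}
    (hσ : Function.Involutive σ) (hodd : ∀ l, Odd (lam l) → σ l ≠ l)
    (hlam : ∀ l, lam (σ l) = lam l) :
    ∃ η : Fin p → k, (∀ l, η l ≠ 0) ∧ ∀ l, η (σ l) = (-1) ^ lam l * η l := by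
  refine ⟨fun l => if Odd (lam l) ∧ l < σ l then -1 else 1, fun l => ?_, fun l => ?_⟩
  · dsimp only
    split_ifs <;> simp
  · simp only [hσ l, hlam]
    rcases Nat.even_or_odd (lam l) with h | h
    · simp [h, Nat.not_odd_iff_even.2 h]
    · rcases lt_or_gt_of_ne (hodd l h) with h1 | h1
      · simp [h, h1, h1.not_gt]
      · simp [h, h1, h1.not_gt]

variable {p : ℕ} (lam : Fin p → ℕ)

/-- The index set of a Jordan basis for the partition `lam`. -/
abbrev JordanIndex : Type := Σ l : Fin p, Fin (lam l)

variable {lam}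

theorem JordanIndex.ext {x y : JordanIndex lam} (h1 : x.1 = y.1)
    (h2 : (x.2 : ℕ) = (y.2 : ℕ)) : x = y := by
  obtain ⟨l, i⟩ := x
  obtain ⟨l', i'⟩ := y
  obtain rfl : l = l' := h1
  obtain rfl : i = i' := Fin.ext h2
  rfl

variable (lam)

/-- The `i`-th power of the nilpotent Jordan matrix of type `lam`. -/
def jordanShift (k : Type*) [Field k] (i : ℕ) : Matrix (JordanIndex lam) (JordanIndex lam) k :=
  Matrix.of fun x y => if y.1 = x.1 ∧ (y.2 : ℕ) = x.2 + i then 1 else 0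

theorem jordanShift_one_pow (k : Type*) [Field k] (i : ℕ) :
    jordanShift lam k 1 ^ i = jordanShift lam k i := by
  induction i with
  | zero =>
    ext x y
    simp only [pow_zero, jordanShift, of_apply, Matrix.one_apply, add_zero]
    refine if_congr ⟨?_, fun h => (JordanIndex.ext h.1 h.2).symm⟩ rfl rfl
    rintro rfl
    exact ⟨rfl, rfl⟩
  | succ i ih =>
    ext x y
    rw [pow_succ, ih, Matrix.mul_apply]
    simp only [jordanShift, of_apply]
    by_cases h : (x.2 : ℕ) + i < lam x.1
    · rw [Fintype.sum_eq_single (⟨x.1, ⟨x.2 + i, h⟩⟩ : JordanIndex lam)]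
      · simp [add_assoc]
      · intro z hz
        rw [if_neg fun h' => hz (JordanIndex.ext h'.1 h'.2), zero_mul]
    · rw [Finset.sum_eq_zero, if_neg]
      · rintro ⟨h1, h2⟩
        have := y.2.2
        have := congrArg lam h1
        omega
      · intro z _
        rw [if_neg, zero_mul]
        rintro ⟨h1, h2⟩
        have := z.2.2
        have := congrArg lam h1
        omega

theorem rank_jordanShift (k : Type*) [Field k] (i : ℕ) :
    (jordanShift lam k i).rank = ∑ l, (lam l - i) := by
  let f : (Σ l, Fin (lam l - i)) → JordanIndex lam := fun a => ⟨a.1, ⟨a.2, by omega⟩⟩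
  let g : (Σ l, Fin (lam l - i)) → JordanIndex lam := fun a => ⟨a.1, ⟨a.2 + i, by omega⟩⟩
  have hcard : Fintype.card (Σ l, Fin (lam l - i)) = ∑ l, (lam l - i) := by simp
  apply le_antisymm
  · rw [← hcard]
    refine (rank_le_card_of_support_subset _ (Finset.univ.image f) ?_).trans
      Finset.card_image_le
    rw [Function.support_subset_iff']
    intro x hx
    ext y
    simp only [Matrix.row, jordanShift, of_apply, Pi.zero_apply, ite_eq_right_iff]
    rintro ⟨h1, h2⟩
    refine absurd ?_ hx
    have := y.2.2
    have := congrArg lam h1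
    simp only [Finset.coe_image, Finset.coe_univ, Set.image_univ, Set.mem_range]
    exact ⟨⟨x.1, ⟨x.2, by omega⟩⟩, rfl⟩
  · have hone : (jordanShift lam k i).submatrix f g = 1 := by
      ext ⟨l, a⟩ ⟨l', b⟩
      simp only [jordanShift, submatrix_apply, of_apply, Matrix.one_apply, f, g]
      refine if_congr ⟨?_, ?_⟩ rfl rfl
      · rintro ⟨h1, h2⟩
        obtain rfl : l' = l := h1
        obtain rfl : a = b := Fin.ext (by simpa using h2.symm)
        rfl
      · intro h
        cases h
        exact ⟨rfl, rfl⟩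
    have h := eRank_submatrix_le (jordanShift lam k i) f g
    rw [hone] at h
    have h' := ENat.toNat_le_toNat h (ne_top_of_le_ne_top (by simp) (eRank_le_card_width _))
    rw [eRank_toNat_eq_rank, eRank_toNat_eq_rank, rank_one, hcard] at h'
    exact h'

variable {lam}

/-- The involution reversing Jordan chains and permuting them by `σ`. -/
def jordanRev {σ : Fin p → Fin p} (hlam : ∀ l, lam (σ l) = lam l) (x : JordanIndex lam) :
    JordanIndex lam :=
  ⟨σ x.1, ⟨lam x.1 - 1 - x.2, by rw [hlam]; omega⟩⟩

theorem jordanRev_involutive {σ : Fin p → Fin p} (hσ : Function.Involutive σ)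
    (hlam : ∀ l, lam (σ l) = lam l) : Function.Involutive (jordanRev hlam) := by
  intro x
  have := x.2.2
  refine JordanIndex.ext (hσ _) ?_
  simp only [jordanRev, hlam]
  omega

/-- The symplectic form adapted to the Jordan matrix. -/
def jordanForm {k : Type*} [Field k] {σ : Fin p → Fin p} (hlam : ∀ l, lam (σ l) = lam l)
    (η : Fin p → k) : Matrix (JordanIndex lam) (JordanIndex lam) k :=
  Matrix.of fun x y => if y = jordanRev hlam x then (-1) ^ (x.2 : ℕ) * η x.1 else 0

variable {k : Type*} [Field k] {σ : Fin p → Fin p} (hlam : ∀ l, lam (σ l) = lam l) {η : Fin p → k}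

theorem neg_one_pow_mul_of_even {a b c : ℕ} (h : Even (a + b + c)) :
    (-1 : k) ^ a * (-1) ^ b = (-1) ^ c := by
  rw [← pow_add]
  have h1 : (-1 : k) ^ (a + b) * (-1) ^ c = 1 := by rw [← pow_add, h.neg_one_pow]
  have h2 : (-1 : k) ^ c * (-1) ^ c = 1 := by rw [← pow_add, Even.neg_one_pow ⟨c, rfl⟩]
  linear_combination (-1 : k) ^ c * h1 - (-1 : k) ^ (a + b) * h2

theorem jordanForm_transpose (hσ : Function.Involutive σ) (hη : ∀ l, η (σ l) = (-1) ^ lam l * η l) :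
    (jordanForm hlam η)ᵀ = -jordanForm hlam η := by
  have hinv := jordanRev_involutive hσ hlam
  ext x y
  simp only [jordanForm, transpose_apply, Matrix.neg_apply, of_apply]
  by_cases h : y = jordanRev hlam x
  · subst h
    rw [hinv x, if_pos rfl, if_pos rfl]
    simp only [jordanRev, hη]
    have h1 := x.2.2
    rw [← mul_assoc, neg_one_pow_mul_of_even (c := x.2 + 1), pow_succ]
    · ring
    · exact ⟨lam x.1, by omega⟩
  · rw [if_neg h, if_neg, neg_zero]
    intro h'
    exact h (by rw [h', hinv])

theorem jordanForm_mulVec_eq_zero (hσ : Function.Involutive σ)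
    (hη0 : ∀ l, η l ≠ 0) (v : JordanIndex lam → k) (hv : jordanForm hlam η *ᵥ v = 0) : v = 0 := by
  ext x
  have h := congrFun hv (jordanRev hlam x)
  simp only [mulVec, dotProduct, jordanForm, of_apply, jordanRev_involutive hσ hlam x,
    ite_mul, zero_mul, Finset.sum_ite_eq', Finset.mem_univ, if_true,
    Pi.zero_apply] at h
  exact (mul_eq_zero.1 h).resolve_left
    (mul_ne_zero (pow_ne_zero _ (neg_ne_zero.2 one_ne_zero)) (hη0 _))

theorem jordanForm_mul_jordanShift_transpose (hσ : Function.Involutive σ)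
    (hη : ∀ l, η (σ l) = (-1) ^ lam l * η l) :
    (jordanForm hlam η * jordanShift lam k 1)ᵀ = jordanForm hlam η * jordanShift lam k 1 := by
  have hentry : ∀ x y, (jordanForm hlam η * jordanShift lam k 1) x y =
      if y.1 = σ x.1 ∧ (x.2 : ℕ) + y.2 = lam x.1 then (-1) ^ (x.2 : ℕ) * η x.1 else 0 := by
    intro x y
    have h1 := x.2.2
    rw [Matrix.mul_apply, Fintype.sum_eq_single (jordanRev hlam x)]
    · simp only [jordanForm, jordanShift, of_apply, if_true, mul_ite, mul_one, mul_zero]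
      congr 1
      simp only [jordanRev, eq_iff_iff]
      refine and_congr Iff.rfl ?_
      omega
    · intro z hz
      simp only [jordanForm, of_apply, if_neg hz, zero_mul]
  ext x y
  rw [transpose_apply, hentry, hentry]
  by_cases h : y.1 = σ x.1 ∧ (x.2 : ℕ) + y.2 = lam x.1
  · obtain ⟨h1, h2⟩ := h
    have h3 := hlam x.1
    have h4 := congrArg lam h1
    rw [if_pos, if_pos ⟨h1, h2⟩, congrArg η h1, hη, ← mul_assoc, neg_one_pow_mul_of_even]
    · exact ⟨lam x.1, by omega⟩
    · exact ⟨by rw [h1, hσ], by omega⟩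
  · rw [if_neg h, if_neg]
    rintro ⟨h1, h2⟩
    have h3 := hlam y.1
    have h4 := congrArg lam h1
    exact h ⟨by rw [h1, hσ], by omega⟩

end JordanModel

section PolynomialCurves

variable {k m : Type*} [Field k] [Fintype m] [DecidableEq m]

/-- A curve of matrices with polynomial entries. -/
def IsPolyCurve (c : k → Matrix m m k) : Prop :=
  ∃ C : Matrix m m (Polynomial k), ∀ t, c t = (Polynomial.evalRingHom t).mapMatrix C

theorem IsPolyCurve.const (A : Matrix m m k) : IsPolyCurve fun _ : k => A :=
  ⟨A.map Polynomial.C, fun t => by ext; simp⟩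

theorem IsPolyCurve.add {c d : k → Matrix m m k} (hc : IsPolyCurve c) (hd : IsPolyCurve d) :
    IsPolyCurve fun t => c t + d t := by
  obtain ⟨C, hC⟩ := hc
  obtain ⟨D, hD⟩ := hd
  exact ⟨C + D, fun t => by simp only [map_add, hC, hD]⟩

theorem IsPolyCurve.mul {c d : k → Matrix m m k} (hc : IsPolyCurve c) (hd : IsPolyCurve d) :
    IsPolyCurve fun t => c t * d t := by
  obtain ⟨C, hC⟩ := hc
  obtain ⟨D, hD⟩ := hd
  exact ⟨C * D, fun t => by simp only [map_mul, hC, hD]⟩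

theorem IsPolyCurve.smul {c : k → Matrix m m k} (hc : IsPolyCurve c) :
    IsPolyCurve fun t => t • c t := by
  obtain ⟨C, hC⟩ := hc
  exact ⟨(Polynomial.X : Polynomial k) • C, fun t => by ext; simp [hC]⟩

/-- A set of matrices is curve-closed if it contains every polynomial curve that lies generically
in it. -/
def IsCurveClosed (Z : Set (Matrix m m k)) : Prop :=
  ∀ (c : k → Matrix m m k), IsPolyCurve c → ∀ d : Polynomial k, d ≠ 0 →
    (∀ t, d.eval t ≠ 0 → c t ∈ Z) → ∀ t, c t ∈ Z

/-- The zero set of a polynomial is curve-closed. -/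
theorem isCurveClosed_zeroSet [Infinite k] {m' : Type*} (f : m' → m)
    (P : MvPolynomial (m' × m') k) :
    IsCurveClosed {M : Matrix m m k |
      MvPolynomial.eval (fun q => M.submatrix f f q.1 q.2) P = 0} := by
  rintro c ⟨C, hC⟩ d hd h t
  let Q : Polynomial k := MvPolynomial.aeval (fun q : m' × m' => C (f q.1) (f q.2)) P
  have hQ : ∀ t, Q.eval t = MvPolynomial.eval (fun q => (c t).submatrix f f q.1 q.2) P := by
    intro t
    change Polynomial.evalRingHom t Q = _
    rw [MvPolynomial.map_aeval, MvPolynomial.eval, MvPolynomial.coe_eval₂Hom,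
      MvPolynomial.coe_eval₂Hom]
    congr 1
    · ext; simp
    · funext q
      simp [hC]
  have hz : Q * d = 0 := by
    apply Polynomial.funext
    intro t
    rw [Polynomial.eval_mul, Polynomial.eval_zero]
    by_cases hdt : d.eval t = 0
    · rw [hdt, mul_zero]
    · rw [hQ, h t hdt, zero_mul]
  have hQ0 : Q = 0 := (mul_eq_zero.1 hz).resolve_right hd
  change MvPolynomial.eval _ P = 0
  rw [← hQ, hQ0, Polynomial.eval_zero]

/-- The quantity whose nonvanishing forces `X` to be invertible with separable characteristic
polynomial. -/
def regularity {R : Type*} [CommRing R] (X : Matrix m m R) : R :=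
  (Polynomial.aeval X X.charpoly.derivative).det * X.det

theorem map_regularity {R S : Type*} [CommRing R] [CommRing S] (φ : R →+* S) (X : Matrix m m R) :
    φ (regularity X) = regularity (φ.mapMatrix X) := by
  have h : (algebraMap S (Matrix m m S)).comp φ = φ.mapMatrix.comp (algebraMap R _) := by
    ext a i j
    simp [Matrix.algebraMap_matrix_apply, apply_ite φ]
  rw [regularity, map_mul, RingHom.map_det, RingHom.map_det,
    Polynomial.map_aeval_eq_aeval_map (φ := φ) h, ← Polynomial.derivative_map,
    ← Matrix.charpoly_map]
  rfl

theorem charpoly_separable_of_regularity_ne_zero [IsAlgClosed k] {X : Matrix m m k}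
    (h : regularity X ≠ 0) : X.charpoly.Separable := by
  rw [Polynomial.Separable, Polynomial.isCoprime_iff_aeval_ne_zero_of_isAlgClosed k k]
  intro a
  by_contra! hc
  obtain ⟨h1, h2⟩ := hc
  simp only [Polynomial.coe_aeval_eq_eval] at h1 h2
  obtain ⟨q, hq⟩ := Polynomial.dvd_iff_isRoot.2 h2
  apply h
  rw [Matrix.eval_charpoly] at h1
  have h3 : (X - scalar m a).det = 0 := by
    rw [← neg_sub, Matrix.det_neg, h1, mul_zero]
  have h4 : algebraMap k (Matrix m m k) a = scalar m a := rfl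
  rw [regularity, hq, map_mul, Matrix.det_mul, map_sub, Polynomial.aeval_X, Polynomial.aeval_C, h4,
    h3, zero_mul, zero_mul]

theorem regularity_ne_zero_of_separable {X : Matrix m m k} (h : X.charpoly.Separable)
    (hdet : X.det ≠ 0) : regularity X ≠ 0 := by
  obtain ⟨a, b, hab⟩ := h
  refine mul_ne_zero (fun h0 => ?_) hdet
  have h1 := congrArg (fun f => (Polynomial.aeval X f).det) hab
  simp [Matrix.aeval_self_charpoly, h0] at h1

theorem isSemisimple_toLin'_of_separable {X : Matrix m m k} (h : X.charpoly.Separable) :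
    Module.End.IsSemisimple (Matrix.toLin' X) := by
  refine Module.End.isSemisimple_of_squarefree_aeval_eq_zero h.squarefree ?_
  have := Polynomial.aeval_algHom_apply (Matrix.toLinAlgEquiv' (R := k) (n := m)) X X.charpoly
  rw [Matrix.aeval_self_charpoly, map_zero] at this
  exact this

end PolynomialCurves

section SympOrbit

variable {k : Type*} [Field k] {n p : ℕ} {lam : Fin p → ℕ}

/-- The nilpotent matrices of Jordan type `lam` in the symplectic Lie algebra, with rows and
columns indexed by a sum type. -/
structure IsSympOrbit (lam : Fin p → ℕ) (M : Matrix (Fin n ⊕ Fin n) (Fin n ⊕ Fin n) k) : Prop where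
  rank : ∀ i, 1 ≤ i → (M ^ i).rank = ∑ l, (lam l - i)
  symm : (blockJ k n * M)ᵀ = blockJ k n * M

theorem IsSympOrbit.conj {M G L : Matrix (Fin n ⊕ Fin n) (Fin n ⊕ Fin n) k}
    (hM : IsSympOrbit lam M) (hGL : G * L = 1) (hJ : Lᵀ * blockJ k n = blockJ k n * G) :
    IsSympOrbit lam (G * M * L) := by
  refine ⟨fun i hi => ?_, ?_⟩
  · rw [rank_conj_pow hGL (mul_eq_one_comm.1 hGL), hM.rank i hi]
  · have h : blockJ k n * (G * M * L) = Lᵀ * (blockJ k n * M) * L := by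
      simp only [← Matrix.mul_assoc, hJ]
    rw [h, Matrix.transpose_mul, Matrix.transpose_mul, Matrix.transpose_transpose, hM.symm]
    simp only [Matrix.mul_assoc]

theorem blockJ_mul_fromBlocks_symm_iff {A B C D : Matrix (Fin n) (Fin n) k} :
    (blockJ k n * fromBlocks A B C D)ᵀ = blockJ k n * fromBlocks A B C D ↔
      Cᵀ = C ∧ D = -Aᵀ ∧ Bᵀ = B := by
  rw [blockJ, fromBlocks_multiply, fromBlocks_transpose]
  simp only [Matrix.zero_mul, Matrix.one_mul, zero_add, Matrix.neg_mul, add_zero, transpose_neg]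
  rw [fromBlocks_inj, neg_inj]
  refine ⟨fun ⟨h1, h2, h3, h4⟩ => ⟨h1, h2.symm, h4⟩, fun ⟨h1, h2, h4⟩ => ⟨h1, h2.symm, ?_, h4⟩⟩
  rw [h2, transpose_neg, transpose_transpose]

theorem IsSympOrbit.scale {A B C D : Matrix (Fin n) (Fin n) k}
    (h : IsSympOrbit lam (fromBlocks A B C D)) {s : k} (hs : s ≠ 0) :
    IsSympOrbit lam (fromBlocks (s • A) ((s * s) • B) C (s • D)) := by
  obtain ⟨hr, hsymm⟩ := h
  rw [blockJ_mul_fromBlocks_symm_iff] at hsymm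
  obtain ⟨h1, h2, h3⟩ := hsymm
  refine ⟨fun i hi => ?_, blockJ_mul_fromBlocks_symm_iff.2 ⟨h1, ?_, ?_⟩⟩
  · let G : Matrix (Fin n ⊕ Fin n) (Fin n ⊕ Fin n) k := fromBlocks (s⁻¹ • 1) 0 0 1
    let L : Matrix (Fin n ⊕ Fin n) (Fin n ⊕ Fin n) k := fromBlocks (s • 1) 0 0 1
    have hLG : L * G = 1 := by
      simp [L, G, fromBlocks_multiply, smul_smul, hs]
    have heq : fromBlocks (s • A) ((s * s) • B) C (s • D) = s • (L * fromBlocks A B C D * G) := by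
      simp [L, G, fromBlocks_multiply, smul_smul, hs, fromBlocks_smul]
    rw [heq, smul_pow, rank_smul_of_mem_nonZeroDivisors _
      (mem_nonZeroDivisors_of_ne_zero (pow_ne_zero i hs)),
      rank_conj_pow hLG (mul_eq_one_comm.1 hLG), hr i hi]
  · rw [h2, transpose_smul, smul_neg]
  · rw [transpose_smul, h3]

theorem exists_isSympOrbit (k : Type*) [Field k] [CharZero k] [IsAlgClosed k]
    (hpos : ∀ l, 1 ≤ lam l) (hsum : ∑ l, lam l = 2 * n)
    (hsymp : ∀ m : ℕ, Odd m → Even ((Finset.univ.filter (fun l => lam l = m)).card))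
    (hpn : p ≤ n) :
    ∃ A B D : Matrix (Fin n) (Fin n) k, IsSympOrbit lam (fromBlocks A B 1 D) := by
  obtain ⟨σ, hσ, hlam, hodd⟩ := exists_part_involution hsymp
  obtain ⟨η, hη0, hη⟩ := exists_part_sign k hσ hodd hlam
  have hrank : n ≤ (jordanShift lam k 1).rank := by
    rw [rank_jordanShift]
    have h1 : ∑ l, lam l = ∑ l, (lam l - 1) + p := by
      have h2 : ∑ l, lam l = ∑ l, ((lam l - 1) + 1) :=
        Finset.sum_congr rfl fun l _ => (Nat.sub_add_cancel (hpos l)).symm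
      rw [h2, Finset.sum_add_distrib]
      simp
    omega
  obtain ⟨M, h1, h2, h3⟩ := exists_standard_form (n := n) (by simpa using hsum)
    (jordanForm_transpose hlam hσ hη) (jordanForm_mulVec_eq_zero hlam hσ hη0)
    (jordanForm_mul_jordanShift_transpose hlam hσ hη) hrank
  refine ⟨M.toBlocks₁₁, M.toBlocks₁₂, M.toBlocks₂₂, ?_⟩
  rw [← h3, fromBlocks_toBlocks]
  exact ⟨fun i _ => by rw [h1, jordanShift_one_pow, rank_jordanShift], h2⟩

variable {Z : Set (Matrix (Fin n ⊕ Fin n) (Fin n ⊕ Fin n) k)}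

theorem antidiagonal_mem [IsAlgClosed k] (hZ : IsCurveClosed Z)
    (hsub : ∀ x y, IsSympOrbit lam x → IsSympOrbit lam y → x + y ∈ Z)
    {A B D : Matrix (Fin n) (Fin n) k} (hM : IsSympOrbit lam (fromBlocks A B 1 D))
    {G L : Matrix (Fin n ⊕ Fin n) (Fin n ⊕ Fin n) k} (hGL : G * L = 1)
    (hJ : Lᵀ * blockJ k n = blockJ k n * G) {t : Fin n → k} (ht : ∀ i, t i ≠ 0) :
    G * fromBlocks 0 (diagonal t) 1 0 * L ∈ Z := by
  choose r hr using fun i => IsAlgClosed.exists_pow_nat_eq (-t i) (n := 2) (by norm_num)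
  have hr0 : ∀ i, r i ≠ 0 := by
    intro i h
    have := hr i
    rw [h] at this
    exact ht i (by simpa using this.symm)
  have hrr : ∀ i, r i * r i = -t i := fun i => by rw [← hr i, sq]
  let H : Matrix (Fin n ⊕ Fin n) (Fin n ⊕ Fin n) k :=
    fromBlocks 0 (diagonal r) (-diagonal fun i => (r i)⁻¹) 0
  let K : Matrix (Fin n ⊕ Fin n) (Fin n ⊕ Fin n) k :=
    fromBlocks 0 (-diagonal r) (diagonal fun i => (r i)⁻¹) 0
  have hHK : H * K = 1 := by
    simp [H, K, fromBlocks_multiply, hr0]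
  have hHJ : Kᵀ * blockJ k n = blockJ k n * H := by
    simp [H, K, blockJ, fromBlocks_multiply, fromBlocks_transpose]
  let x : k → Matrix (Fin n ⊕ Fin n) (Fin n ⊕ Fin n) k := fun s =>
    fromBlocks (s • A) ((s * s) • B) 1 (s • D)
  have hx : IsPolyCurve x := by
    have h := ((IsPolyCurve.const (fromBlocks 0 0 1 0 : Matrix (Fin n ⊕ Fin n) _ k)).add
      (IsPolyCurve.const (fromBlocks A 0 0 D)).smul).add
      (IsPolyCurve.const (fromBlocks 0 B 0 0)).smul.smul
    convert h using 2 with s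
    simp [x, fromBlocks_smul, fromBlocks_add, smul_smul]
  have hcurve : IsPolyCurve fun s => G * (x s + H * x s * K) * L :=
    ((IsPolyCurve.const G).mul (hx.add (((IsPolyCurve.const H).mul hx).mul
      (IsPolyCurve.const K)))).mul (IsPolyCurve.const L)
  have h0 := hZ _ hcurve Polynomial.X Polynomial.X_ne_zero (fun s hs => by
    rw [Polynomial.eval_X] at hs
    rw [Matrix.mul_add, Matrix.add_mul]
    exact hsub _ _ ((hM.scale hs).conj hGL hJ) (((hM.scale hs).conj hHK hHJ).conj hGL hJ)) 0
  have h1 : x 0 + H * x 0 * K = fromBlocks 0 (diagonal t) 1 0 := by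
    simp [x, H, K, fromBlocks_multiply, fromBlocks_add, hrr]
  rwa [h1] at h0

theorem mem_of_regularity_ne_zero [CharZero k] [IsAlgClosed k] (hZ : IsCurveClosed Z)
    (hsub : ∀ x y, IsSympOrbit lam x → IsSympOrbit lam y → x + y ∈ Z)
    {A B D : Matrix (Fin n) (Fin n) k} (hM : IsSympOrbit lam (fromBlocks A B 1 D))
    {X : Matrix (Fin n ⊕ Fin n) (Fin n ⊕ Fin n) k} (hX : (blockJ k n * X)ᵀ = blockJ k n * X)
    (hreg : regularity X ≠ 0) : X ∈ Z := by
  have hdet : IsUnit X.det := (right_ne_zero_of_mul hreg).isUnit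
  have hJinj : ∀ v, blockJ k n *ᵥ v = 0 → v = 0 := by
    intro v hv
    have h := congrArg (fun z => blockJ k n *ᵥ z) hv
    simpa [blockJ_mul_self, neg_mulVec] using h
  have hJt := blockJ_transpose k n
  obtain ⟨w, u, t, hd, ht, hw, hu⟩ := exists_darboux_of_isSemisimple n (matForm (blockJ k n))
    (matForm_alt hJt) (matForm_nondegenerate hJt hJinj) (Matrix.toLin' X)
    (fun x y => by
      have hXJ : Xᵀ * blockJ k n = -(blockJ k n * X) := by
        rw [← hX, Matrix.transpose_mul, hJt, Matrix.mul_neg, neg_neg]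
      rw [matForm_apply, matForm_apply, Matrix.toLin'_apply, Matrix.toLin'_apply,
        ← Matrix.vecMul_transpose, ← Matrix.dotProduct_mulVec, Matrix.mulVec_mulVec, hXJ,
        Matrix.mulVec_mulVec, Matrix.neg_mulVec, dotProduct_neg])
    (isSemisimple_toLin'_of_separable (charpoly_separable_of_regularity_ne_zero hreg))
    (fun x hx => by
      rw [Matrix.toLin'_apply] at hx
      exact Matrix.eq_zero_of_mulVec_eq_zero hdet.ne_zero hx)
    (by simp [two_mul])
  have hgram := hd.frame_gram hJt
  have hLG := frame_inverse hgram
  have hGL := mul_eq_one_comm.1 hLG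
  have hXG : X * frame w u = frame w u * fromBlocks 0 (diagonal t) 1 0 := by
    ext i s
    rcases s with s | s
    · have h1 : (X * frame w u) i (Sum.inl s) = (Matrix.toLin' X (w s)) i := rfl
      rw [h1, hw, Matrix.mul_apply, Fintype.sum_sum_type]
      simp [frame, Matrix.one_apply]
    · have h1 : (X * frame w u) i (Sum.inr s) = (Matrix.toLin' X (u s)) i := rfl
      rw [h1, hu, Matrix.mul_apply, Fintype.sum_sum_type]
      simp [frame, Matrix.diagonal_apply, mul_comm]
  have hmem := antidiagonal_mem hZ hsub hM hGL (by
    simp only [transpose_neg, Matrix.transpose_mul, Matrix.transpose_transpose, hJt,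
      Matrix.mul_neg, Matrix.neg_mul, neg_neg, Matrix.mul_assoc, blockJ_mul_self,
      Matrix.mul_one]) ht
  rwa [← hXG, Matrix.mul_assoc, hGL, Matrix.mul_one] at hmem

theorem exists_regular (k : Type*) [Field k] [CharZero k] (n : ℕ) :
    ∃ X : Matrix (Fin n ⊕ Fin n) (Fin n ⊕ Fin n) k,
      (blockJ k n * X)ᵀ = blockJ k n * X ∧ regularity X ≠ 0 := by
  let a : Fin n → k := fun i => ((i : ℕ) : k) + 1
  have ha : ∀ i, a i = (((i : ℕ) + 1 : ℕ) : k) := fun i => by simp [a]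
  refine ⟨fromBlocks (diagonal a) 0 0 (diagonal fun i => -a i),
    blockJ_mul_fromBlocks_symm_iff.2 (by simp [← diagonal_neg]), ?_⟩
  have hne : ∀ i j, a i ≠ -a j := by
    intro i j h
    rw [eq_neg_iff_add_eq_zero, ha, ha, ← Nat.cast_add, Nat.cast_eq_zero] at h
    omega
  have hinj : Function.Injective a := by
    intro i j h
    rw [ha, ha, Nat.cast_inj] at h
    exact Fin.ext (by omega)
  have ha0 : ∀ i, a i ≠ 0 := fun i => by rw [ha, Nat.cast_ne_zero]; omega
  rw [fromBlocks_diagonal]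
  apply regularity_ne_zero_of_separable
  · rw [charpoly_diagonal, Polynomial.separable_prod_X_sub_C_iff]
    rintro (i | i) (j | j) h
    · exact congrArg Sum.inl (hinj h)
    · exact absurd h (hne i j)
    · exact absurd h.symm (hne j i)
    · exact congrArg Sum.inr (hinj (neg_injective h))
  · rw [det_diagonal]
    refine Finset.prod_ne_zero_iff.2 ?_
    rintro (i | i) -
    · exact ha0 i
    · exact neg_ne_zero.2 (ha0 i)

/-- A curve-closed set containing all pairwise sums of elements of the orbit contains the whole
symplectic Lie algebra. -/
theorem mem_of_isCurveClosed [CharZero k] [IsAlgClosed k] (hZ : IsCurveClosed Z)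
    (hsub : ∀ x y, IsSympOrbit lam x → IsSympOrbit lam y → x + y ∈ Z)
    {A B D : Matrix (Fin n) (Fin n) k} (hM : IsSympOrbit lam (fromBlocks A B 1 D))
    {X : Matrix (Fin n ⊕ Fin n) (Fin n ⊕ Fin n) k} (hX : (blockJ k n * X)ᵀ = blockJ k n * X) :
    X ∈ Z := by
  obtain ⟨Y, hY, hYreg⟩ := exists_regular k n
  have hcurve : IsPolyCurve fun t : k => Y + t • (X - Y) :=
    (IsPolyCurve.const Y).add (IsPolyCurve.const (X - Y)).smul
  obtain ⟨C, hC⟩ := id hcurve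
  have hC' : ∀ t, Y + t • (X - Y) = (Polynomial.evalRingHom t).mapMatrix C := hC
  have heval : ∀ t, (regularity C).eval t = regularity (Y + t • (X - Y)) := fun t => by
    rw [hC' t, ← map_regularity]
    rfl
  have h := hZ _ hcurve (regularity C) (fun h0 => hYreg (by simpa [h0] using (heval 0).symm))
    (fun t ht => by
      rw [heval] at ht
      refine mem_of_regularity_ne_zero hZ hsub hM ?_ ht
      simp only [Matrix.mul_add, Matrix.mul_smul, Matrix.mul_sub, transpose_add, transpose_smul,
        transpose_sub, hX, hY]) 1
  simpa using h

end SympOrbit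

section Reindex

variable {k : Type*} {n : ℕ}

/-- The identification of the two halves of `Fin (2 * n)` with two copies of `Fin n`. -/
def halvesEquiv (n : ℕ) : Fin n ⊕ Fin n ≃ Fin (2 * n) :=
  finSumFinEquiv.trans (finCongr (two_mul n).symm)

theorem Jmat_submatrix_halvesEquiv [CommRing k] :
    (Jmat k n).submatrix (halvesEquiv n) (halvesEquiv n) = blockJ k n := by
  ext i j
  rcases i with i | i <;> rcases j with j | j <;>
    simp [Jmat, blockJ, halvesEquiv, Matrix.one_apply, Fin.ext_iff] <;> grind

theorem mem_spSet [CommRing k] {M : Matrix (Fin (2 * n)) (Fin (2 * n)) k} :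
    M ∈ spSet k n ↔ Mᵀ * Jmat k n + Jmat k n * M = 0 :=
  Iff.rfl

theorem mem_spSet_iff_submatrix [Field k] {M : Matrix (Fin (2 * n)) (Fin (2 * n)) k} :
    M ∈ spSet k n ↔ (blockJ k n * M.submatrix (halvesEquiv n) (halvesEquiv n))ᵀ =
      blockJ k n * M.submatrix (halvesEquiv n) (halvesEquiv n) := by
  have h : M ∈ spSet k n ↔ (Mᵀ * Jmat k n + Jmat k n * M).submatrix
      (halvesEquiv n) (halvesEquiv n) = 0 := by
    refine ⟨fun h => by rw [mem_spSet.1 h]; rfl, fun h => ?_⟩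
    refine Matrix.ext fun i j => ?_
    have := congrFun (congrFun h ((halvesEquiv n).symm i)) ((halvesEquiv n).symm j)
    simpa using this
  rw [h, Matrix.submatrix_add, Pi.add_apply, Pi.add_apply,
    ← Matrix.submatrix_mul_equiv _ _ _ (halvesEquiv n),
    ← Matrix.submatrix_mul_equiv _ _ _ (halvesEquiv n), Jmat_submatrix_halvesEquiv,
    Matrix.transpose_mul, blockJ_transpose, Matrix.mul_neg, Matrix.transpose_submatrix,
    neg_eq_iff_add_eq_zero]

theorem IsSympOrbit.submatrix_mem [Field k] {p : ℕ} {lam : Fin p → ℕ}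
    {x : Matrix (Fin n ⊕ Fin n) (Fin n ⊕ Fin n) k} (hx : IsSympOrbit lam x) :
    x.submatrix (halvesEquiv n).symm (halvesEquiv n).symm ∈
      jordanOrbit k (2 * n) lam ∩ spSet k n := by
  refine ⟨fun i hi => ?_, mem_spSet_iff_submatrix.2 (by simpa using hx.symm)⟩
  have hpow := (map_pow (Matrix.reindexAlgEquiv k k (halvesEquiv n)) x i).symm
  rw [Matrix.coe_reindexAlgEquiv, Matrix.reindex_apply, Matrix.reindex_apply] at hpow
  rw [hpow, Matrix.rank_submatrix, hx.rank i hi]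

theorem spSet_add_mem [CommRing k] {x y : Matrix (Fin (2 * n)) (Fin (2 * n)) k}
    (hx : x ∈ spSet k n) (hy : y ∈ spSet k n) : x + y ∈ spSet k n := by
  have h : (xᵀ * Jmat k n + Jmat k n * x) + (yᵀ * Jmat k n + Jmat k n * y) = 0 := by
    rw [mem_spSet.1 hx, mem_spSet.1 hy, add_zero]
  rw [mem_spSet, Matrix.transpose_add, Matrix.add_mul, Matrix.mul_add, ← h]
  abel

theorem zClosure_subset_spSet [CommRing k] {S : Set (Matrix (Fin (2 * n)) (Fin (2 * n)) k)}
    (hS : S ⊆ spSet k n) : zClosure S ⊆ spSet k n := by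
  intro M hM
  let P : Fin (2 * n) → Fin (2 * n) → MvPolynomial (Fin (2 * n) × Fin (2 * n)) k := fun i j =>
    ∑ l, MvPolynomial.X (l, i) * MvPolynomial.C (Jmat k n l j) +
      ∑ l, MvPolynomial.C (Jmat k n i l) * MvPolynomial.X (l, j)
  have hP : ∀ (x : Matrix (Fin (2 * n)) (Fin (2 * n)) k) i j,
      MvPolynomial.eval (fun q => x q.1 q.2) (P i j) =
        (xᵀ * Jmat k n + Jmat k n * x) i j := fun x i j => by
    simp [P, Matrix.mul_apply]
  refine Matrix.ext fun i j => ?_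
  rw [← hP]
  refine hM _ fun x hx => ?_
  rw [hP, mem_spSet.1 (hS hx)]
  rfl

end Reindex

/-- For a symplectic partition `λ` of `2n` with at most `n` parts, the conical secant
variety of the nilpotent `Sp_{2n}`-orbit `O_λ ∩ sp_{2n}` is all of `sp_{2n}`. -/
theorem stmt3 {k : Type*} [Field k] [IsAlgClosed k] [CharZero k]
    {n p : ℕ} (lam : Fin p → ℕ)
    (hanti : Antitone lam) (hpos : ∀ l, 1 ≤ lam l)
    (hsum : ∑ l, lam l = 2 * n)
    (hsymp : IsSymplecticParts lam)
    (hpn : p ≤ n) :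
    zClosure (Set.image2 (· + ·) (jordanOrbit k (2 * n) lam ∩ spSet k n)
        (jordanOrbit k (2 * n) lam ∩ spSet k n))
      = spSet k n := by
  refine (zClosure_subset_spSet ?_).antisymm fun M hM P hP => ?_
  · rintro _ ⟨x, hx, y, hy, rfl⟩
    exact spSet_add_mem hx.2 hy.2
  · obtain ⟨A, B, D, hABD⟩ := exists_isSympOrbit k hpos hsum hsymp hpn
    have hinf : Infinite k := IsAlgClosed.instInfinite
    have h := mem_of_isCurveClosed (isCurveClosed_zeroSet (halvesEquiv n).symm P)
      (fun x y hx hy => hP _ ⟨_, hx.submatrix_mem, _, hy.submatrix_mem, rfl⟩) hABD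
      (mem_spSet_iff_submatrix.1 hM)
    simpa using h
end
end
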